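/- For every 0 < ε < 1 there exists C > 0 such that, for p ≥ C log n / n, the binomial random graph G = G_{n,p} asymptotically almost surely satisfies the following: for every H ∈ H^ε_{n,p}(G) with G' := G ∖ H, every path P' on V, and every longest path P = v_1…v_ℓ in G' ∪ P', there exists a set U ⊆ V with |U| ≥ (1/2 + ε/4)n such that for every v ∈ U there exists a longest path Q_v in G' ∪ P' with endpoints v_ℓ and v and with V(Q_v) = V(P). -/

import Mathlib

/-!
Rotate the longest path `P` inside `G \ H`, keeping its last vertex fixed, and let `E_t` be the set
of first vertices reached after at most `t` rotations.

Pósa's argument confines the neighbours of `E_t` to `E_t` and the neighbours on `P` of `E_{t+1}`.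
As `H` leaves at least about `ε n p` edges at every vertex and small sets of `G_{n,p}` do not span
that many edges with sets of five times their size, `E_t` doubles until it has more than `ε n / 40`
elements.

After that, cut `P` into segments of length about `δ n / (3 log n)`. Each rotation breaks at most
one segment, and an endpoint whose rotated path traverses a segment unbroken, in a fixed direction,
sends edges there only to vertices next to `E_{t+1}` on one side. Hence almost all edges leaving a
set `A ⊆ E_t` in `G \ H` go to sets of total size about `|E_{t+1}|`, and there are at most about
`p |A| |E_{t+1}|` of them. Conversely, the degree sequence of `H` allows only the `m` vertices of
largest degree to have fewer than about `(m + ε n) p` neighbours in `G \ H`. Choosing `m` slightly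
below `min(|E_t|, n / 2)` yields `|E_{t+1}| ≥ min(|E_t|, n / 2) + ε n / 4`, so `O(log n)` rotations
suffice.
-/

open Filter Real

namespace Resilience

variable {V : Type*}

/-- The degree of a vertex, as the cardinality of its neighbourhood. -/
noncomputable def deg (G : SimpleGraph V) (v : V) : ℕ := (G.neighborSet v).ncard

/-- The neighbourhood of a set of vertices: all vertices with a neighbour in `X`. -/
def nbhd (G : SimpleGraph V) (X : Set V) : Set V := {v | ∃ x ∈ X, G.Adj v x}

/-- The minimum degree over a set of vertices. -/
noncomputable def minDeg (G : SimpleGraph V) (X : Set V) : ℕ :=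
  sInf ((fun v => deg G v) '' X)

/-- The number of edges of `G` with one endpoint in `X` and the other in `Y`. -/
noncomputable def eBetween (G : SimpleGraph V) (X Y : Set V) : ℕ :=
  {e ∈ G.edgeSet | ∃ x ∈ X, ∃ y ∈ Y, e = s(x, y)}.ncard

/-- The number of edges of `G` with both endpoints in `A`. -/
noncomputable def eIn (G : SimpleGraph V) (A : Set V) : ℕ :=
  {e ∈ G.edgeSet | ∀ v ∈ e, v ∈ A}.ncard

/-- The graph on `V` whose edges are the consecutive pairs of the list `l`;
this lets us view a path, recorded as a list of distinct vertices, as a graph. -/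
def listGraph (l : List V) : SimpleGraph V :=
  SimpleGraph.fromEdgeSet {e | ∃ q ∈ l.zip l.tail, e = s(q.1, q.2)}

/-- `l` is a (nonempty) path on `V` all of whose edges lie in `G`. -/
def IsPathOn (G : SimpleGraph V) (l : List V) : Prop :=
  l ≠ [] ∧ l.Nodup ∧ l.Chain' G.Adj

/-- `l` is a longest path with all edges in `G`. -/
def IsLongestPathOn (G : SimpleGraph V) (l : List V) : Prop :=
  IsPathOn G l ∧ ∀ l' : List V, IsPathOn G l' → l'.length ≤ l.length

/-- `l'` is obtained from the path `l` (with fixed last endpoint) by a single rotation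
within `G`, whose broken edge lies on the original path `P`.  Writing
`l = a :: t₁ ++ c :: b :: t₂`, the pivot is `b`, the new edge is `ab ∈ G`, the broken
edge is `cb` (an edge of `P`), and the rotated path is `(a :: t₁ ++ [c]).reverse ++ b :: t₂`. -/
def IsRotation (G : SimpleGraph V) (P l l' : List V) : Prop :=
  ∃ (a c b : V) (t₁ t₂ : List V),
    l = a :: t₁ ++ c :: b :: t₂ ∧ G.Adj a b ∧ (listGraph P).Adj c b ∧
    l' = (a :: t₁ ++ [c]).reverse ++ b :: t₂

/-- The set of paths obtainable from `P` by at most `t` successive rotations within `G`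
with fixed last endpoint, all broken edges lying on `P`. -/
def rotSet (G : SimpleGraph V) (P : List V) : ℕ → Set (List V)
  | 0 => {P}
  | t + 1 => rotSet G P t ∪ {l' | ∃ l ∈ rotSet G P t, IsRotation G P l l'}

/-- `R^t_{G,P,u}`: the set of endpoints of paths obtainable from `P` by at most `t`
successive rotations within `G` with fixed last endpoint. -/
def Rset (G : SimpleGraph V) (P : List V) (t : ℕ) : Set V :=
  {x | ∃ l ∈ rotSet G P t, l.head? = some x}

/-- The family `H^ε_{n,p}` of Pósa-type subgraphs: there is an ordering of the vertices
with non-increasing degrees such that `d_H(v_i) ≤ (n-i)p - εnp` for all `i < n/2`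
(1-based indexing). -/
def PosaFamily (n : ℕ) (p ε : ℝ) (H : SimpleGraph (Fin n)) : Prop :=
  ∃ v : Fin n → Fin n, Function.Bijective v ∧
    (∀ i j : Fin n, i ≤ j → deg H (v j) ≤ deg H (v i)) ∧
    ∀ i : Fin n, ((i.1 : ℝ) + 1) < n / 2 →
      (deg H (v i) : ℝ) ≤ ((n : ℝ) - ((i.1 : ℝ) + 1)) * p - ε * n * p

/-- The family `H^{ε,δ}_{n,p}` of (shifted) Chvátal-type subgraphs, where the shift
`δn` is recorded as a natural number `s`: there is an ordering of the vertices with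
non-increasing degrees such that for all `i < n/2` (1-based indexing), either
`d_H(v_i) ≤ (n-i)p - εnp` or `d_H(v_{n-i-s}) ≤ ip - εnp`. -/
def ChvatalFamily (n : ℕ) (p ε : ℝ) (s : ℕ) (H : SimpleGraph (Fin n)) : Prop :=
  ∃ v : Fin n → Fin n, Function.Bijective v ∧
    (∀ i j : Fin n, i ≤ j → deg H (v j) ≤ deg H (v i)) ∧
    ∀ i : Fin n, ((i.1 : ℝ) + 1) < n / 2 →
      ((deg H (v i) : ℝ) ≤ ((n : ℝ) - ((i.1 : ℝ) + 1)) * p - ε * n * p ∨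
       (deg H (v ⟨n - (i.1 + 1) - s - 1, by have := i.2; omega⟩) : ℝ) ≤
         ((i.1 : ℝ) + 1) * p - ε * n * p)

/-- The probability weight of a fixed graph `G` in the binomial random graph `G_{n,p}`. -/
noncomputable def weight (n : ℕ) (p : ℝ) (G : SimpleGraph (Fin n)) : ℝ :=
  p ^ G.edgeSet.ncard * (1 - p) ^ (n.choose 2 - G.edgeSet.ncard)

open Classical in
/-- The probability that the binomial random graph `G_{n,p}` satisfies the property `Q`. -/
noncomputable def Pr (n : ℕ) (p : ℝ) (Q : SimpleGraph (Fin n) → Prop) : ℝ :=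
  ∑ G : SimpleGraph (Fin n), if Q G then weight n p G else 0

/-- Property `RE(δ)` for a (connected) graph `G` on `n` vertices: for every path `P`
on the vertex set, either `G ∪ P` has a longer path, or there are at least `δn` vertices
`v`, each with a set `T v` of at least `δn` vertices `w`, such that `G ∪ P` has a path
from `v` to `w` with the same vertex set as `P`. -/
def RE (n : ℕ) (δ : ℝ) (G : SimpleGraph (Fin n)) : Prop :=
  G.Connected ∧
  ∀ P : List (Fin n), P ≠ [] → P.Nodup →
    (∃ Q : List (Fin n), IsPathOn (G ⊔ listGraph P) Q ∧ P.length < Q.length) ∨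
    (∃ S : Set (Fin n), δ * n ≤ S.ncard ∧
      ∃ T : Fin n → Set (Fin n), (∀ v ∈ S, δ * n ≤ (T v).ncard) ∧
        ∀ v ∈ S, ∀ w ∈ T v, ∃ Q : List (Fin n),
          IsPathOn (G ⊔ listGraph P) Q ∧ Q.head? = some v ∧ Q.getLast? = some w ∧
          Q.toFinset = P.toFinset)

/-- `G₂` complements `G₁` (with respect to parameter `δ` as in `RE(δ)`): for every path
`P` on the vertex set, either `G₁ ∪ P` has a longer path, or there are sets `S`, `T v`
as in the definition of `RE(δ)` together with `v ∈ S` and `w ∈ T v` such that `vw` is an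
edge of `G₁ ∪ G₂`. -/
def Complements (n : ℕ) (δ : ℝ) (G₁ G₂ : SimpleGraph (Fin n)) : Prop :=
  ∀ P : List (Fin n), P ≠ [] → P.Nodup →
    (∃ Q : List (Fin n), IsPathOn (G₁ ⊔ listGraph P) Q ∧ P.length < Q.length) ∨
    (∃ S : Set (Fin n), δ * n ≤ S.ncard ∧
      ∃ T : Fin n → Set (Fin n), (∀ v ∈ S, δ * n ≤ (T v).ncard) ∧
        (∀ v ∈ S, ∀ w ∈ T v, ∃ Q : List (Fin n),
          IsPathOn (G₁ ⊔ listGraph P) Q ∧ Q.head? = some v ∧ Q.getLast? = some w ∧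
          Q.toFinset = P.toFinset) ∧
        ∃ v ∈ S, ∃ w ∈ T v, (G₁ ⊔ G₂).Adj v w)

/-! ### The binomial random graph -/

section RandomGraph

variable {n : ℕ} {p : ℝ}

open Classical in
lemma sum_weight_mul_prod (n : ℕ) (p : ℝ) (g : Sym2 (Fin n) → ℝ) :
    ∑ G : SimpleGraph (Fin n), weight n p G * ∏ e ∈ G.edgeFinset, g e
      = ∏ e ∈ (⊤ : SimpleGraph (Fin n)).edgeFinset, (p * g e + (1 - p)) := by
  rw [Finset.prod_add]
  refine Finset.sum_bij' (fun G _ => G.edgeFinset)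
    (fun s _ => SimpleGraph.fromEdgeSet (s : Set (Sym2 (Fin n))))
    (fun G _ => Finset.mem_powerset.2 (SimpleGraph.edgeFinset_mono le_top))
    (fun s _ => Finset.mem_univ _) (fun G _ => by simp) (fun s hs => ?_) (fun G _ => ?_)
  · have hloopless : ∀ e ∈ s, ¬ e.IsDiag := fun e he =>
      SimpleGraph.not_isDiag_of_mem_edgeFinset (Finset.mem_powerset.1 hs he)
    ext e
    simpa using hloopless e
  · rw [Finset.prod_const, Finset.prod_mul_distrib, Finset.prod_const,
      Finset.card_sdiff_of_subset (SimpleGraph.edgeFinset_mono le_top),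
      SimpleGraph.card_edgeFinset_top_eq_card_choose_two, Fintype.card_fin, weight,
      Set.ncard_eq_toFinset_card', ← SimpleGraph.edgeFinset]
    ring

lemma sum_weight (n : ℕ) (p : ℝ) : ∑ G : SimpleGraph (Fin n), weight n p G = 1 := by
  simpa using sum_weight_mul_prod n p fun _ => 1

lemma weight_nonneg (hp : p ∈ Set.Icc (0 : ℝ) 1) (G : SimpleGraph (Fin n)) : 0 ≤ weight n p G :=
  mul_nonneg (pow_nonneg hp.1 _) (pow_nonneg (sub_nonneg.2 hp.2) _)

lemma pr_mono (hp : p ∈ Set.Icc (0 : ℝ) 1) {Q R : SimpleGraph (Fin n) → Prop}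
    (h : ∀ G, Q G → R G) : Pr n p Q ≤ Pr n p R := by
  classical
  simp only [Pr, ← Finset.sum_filter]
  exact Finset.sum_le_sum_of_subset_of_nonneg (Finset.monotone_filter_right _ fun G _ => h G)
    fun G _ _ => weight_nonneg hp G

lemma pr_eq_one_sub (n : ℕ) (p : ℝ) (Q : SimpleGraph (Fin n) → Prop) :
    Pr n p Q = 1 - Pr n p fun G => ¬ Q G := by
  classical
  rw [eq_sub_iff_add_eq, ← sum_weight n p, Pr, Pr, ← Finset.sum_add_distrib]
  refine Finset.sum_congr rfl fun G _ => ?_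
  by_cases hQ : Q G <;> simp [hQ]

lemma pr_or_le (hp : p ∈ Set.Icc (0 : ℝ) 1) (Q R : SimpleGraph (Fin n) → Prop) :
    Pr n p (fun G => Q G ∨ R G) ≤ Pr n p Q + Pr n p R := by
  classical
  rw [Pr, Pr, Pr, ← Finset.sum_add_distrib]
  refine Finset.sum_le_sum fun G _ => ?_
  by_cases hQ : Q G <;> by_cases hR : R G <;> simp [hQ, hR, weight_nonneg hp]

lemma pr_exists_le_sum (hp : p ∈ Set.Icc (0 : ℝ) 1) {ι : Type*} (s : Finset ι)
    (Q : ι → SimpleGraph (Fin n) → Prop) :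
    Pr n p (fun G => ∃ i ∈ s, Q i G) ≤ ∑ i ∈ s, Pr n p (Q i) := by
  classical
  have hterm_nonneg (G : SimpleGraph (Fin n)) (i : ι) : 0 ≤ if Q i G then weight n p G else 0 := by
    split_ifs <;> simp [weight_nonneg hp]
  simp only [Pr]
  rw [Finset.sum_comm]
  refine Finset.sum_le_sum fun G _ => ?_
  split_ifs with h
  · obtain ⟨i, hi, hQ⟩ := h
    simpa [hQ] using Finset.single_le_sum (fun j _ => hterm_nonneg G j) hi
  · exact Finset.sum_nonneg fun i _ => hterm_nonneg G i

open Classical in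
lemma pr_le_sum_le_exp (hp : p ∈ Set.Icc (0 : ℝ) 1) (f : Sym2 (Fin n) → ℝ) (x : ℝ) :
    Pr n p (fun G => x ≤ ∑ e ∈ G.edgeFinset, f e)
      ≤ exp (-x + p * ∑ e ∈ (⊤ : SimpleGraph (Fin n)).edgeFinset, (exp (f e) - 1)) := by
  calc Pr n p (fun G => x ≤ ∑ e ∈ G.edgeFinset, f e)
      ≤ ∑ G : SimpleGraph (Fin n), exp (-x) * (weight n p G * ∏ e ∈ G.edgeFinset, exp (f e)) := by
        refine Finset.sum_le_sum fun G _ => ?_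
        have hweight := weight_nonneg hp G
        rw [← Real.exp_sum, mul_left_comm, ← Real.exp_add]
        split_ifs with h
        · exact le_mul_of_one_le_right hweight (Real.one_le_exp (by linarith))
        · positivity
    _ = exp (-x) * ∏ e ∈ (⊤ : SimpleGraph (Fin n)).edgeFinset, (p * exp (f e) + (1 - p)) := by
        rw [← Finset.mul_sum, sum_weight_mul_prod]
    _ ≤ exp (-x) * ∏ e ∈ (⊤ : SimpleGraph (Fin n)).edgeFinset, exp (p * (exp (f e) - 1)) := by
        have := sub_nonneg.2 hp.2
        have := hp.1
        gcongr with e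
        linarith [Real.add_one_le_exp (p * (exp (f e) - 1))]
    _ = exp (-x + p * ∑ e ∈ (⊤ : SimpleGraph (Fin n)).edgeFinset, (exp (f e) - 1)) := by
        rw [← Real.exp_sum, ← Real.exp_add, Finset.mul_sum]

end RandomGraph

/-! ### Counting edges between vertex sets -/

section CardInteredges

variable {G G' H : SimpleGraph V} {A A' B B' : Finset V}

open Classical in
/-- The number `e_G(A, B)` of ordered pairs in `A × B` that are adjacent in `G`. In contrast to
`eBetween`, an edge inside `A ∩ B` counts twice, which makes the count additive in `A` and `B`. -/
noncomputable def cardInteredges (G : SimpleGraph V) (A B : Finset V) : ℕ :=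
  (G.interedges A B).card

lemma cardInteredges_le_of_adj
    (h : ∀ a ∈ A, ∀ b ∈ B, G.Adj a b → a ∈ A' ∧ b ∈ B' ∧ G'.Adj a b) :
    cardInteredges G A B ≤ cardInteredges G' A' B' := by
  classical
  refine Finset.card_le_card fun x hx => ?_
  rw [SimpleGraph.mem_interedges_iff] at hx ⊢
  exact h _ hx.1 _ hx.2.1 hx.2.2

@[gcongr]
lemma cardInteredges_mono (hG : G ≤ G') (hA : A ⊆ A') (hB : B ⊆ B') :
    cardInteredges G A B ≤ cardInteredges G' A' B' :=
  cardInteredges_le_of_adj fun _ ha _ hb h => ⟨hA ha, hB hb, hG h⟩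

lemma cardInteredges_le_mul (G : SimpleGraph V) (A B : Finset V) :
    cardInteredges G A B ≤ A.card * B.card := by
  classical
  exact G.card_interedges_le_mul A B

lemma cardInteredges_union_left_le [DecidableEq V] (G : SimpleGraph V) (A A' B : Finset V) :
    cardInteredges G (A ∪ A') B ≤ cardInteredges G A B + cardInteredges G A' B := by
  classical
  refine (Finset.card_le_card fun x hx => ?_).trans (Finset.card_union_le _ _)
  simp only [Finset.mem_union, SimpleGraph.mem_interedges_iff] at hx ⊢
  tauto

lemma cardInteredges_biUnion_right_le [DecidableEq V] {ι : Type*} (G : SimpleGraph V)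
    (A : Finset V) (I : Finset ι) (B : ι → Finset V) :
    cardInteredges G A (I.biUnion B) ≤ ∑ i ∈ I, cardInteredges G A (B i) := by
  classical
  simp only [cardInteredges, SimpleGraph.interedges_biUnion_right]
  convert Finset.card_biUnion_le

lemma cardInteredges_le_add_sdiff (G H : SimpleGraph V) (A B : Finset V) :
    cardInteredges G A B ≤ cardInteredges (G \ H) A B + cardInteredges H A B := by
  classical
  refine (Finset.card_le_card fun x hx => ?_).trans (Finset.card_union_le _ _)
  simp only [Finset.mem_union, SimpleGraph.mem_interedges_iff, SimpleGraph.sdiff_adj] at hx ⊢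
  tauto

lemma cardInteredges_univ [Fintype V] (G : SimpleGraph V) (A : Finset V) :
    cardInteredges G A Finset.univ = ∑ a ∈ A, deg G a := by
  classical
  rw [cardInteredges, SimpleGraph.interedges, Rel.interedges, Finset.card_filter,
    Finset.sum_product]
  refine Finset.sum_congr rfl fun a _ => ?_
  rw [← Finset.card_filter, deg, ← Set.ncard_coe_finset]
  congr 1
  ext v
  simp

open Classical in
/-- The number of ordered pairs in `A × B` whose underlying unordered pair is `e`, that is, the
contribution of the edge `e` to `cardInteredges`. -/
noncomputable def pairMultiplicity (A B : Finset V) (e : Sym2 V) : ℕ :=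
  ((A ×ˢ B).filter fun q => s(q.1, q.2) = e).card

lemma pairMultiplicity_le_two (A B : Finset V) (e : Sym2 V) : pairMultiplicity A B e ≤ 2 := by
  classical
  induction e using Sym2.ind with
  | _ x y =>
    refine (Finset.card_le_card (t := {(x, y), (y, x)}) fun q hq => ?_).trans Finset.card_le_two
    simpa [Sym2.eq_iff, Prod.ext_iff] using (Finset.mem_filter.1 hq).2

lemma cardInteredges_eq_sum_pairMultiplicity (G : SimpleGraph V) [Fintype G.edgeSet]
    (A B : Finset V) : cardInteredges G A B = ∑ e ∈ G.edgeFinset, pairMultiplicity A B e := by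
  classical
  rw [cardInteredges, Finset.card_eq_sum_card_fiberwise (f := fun q => s(q.1, q.2))
    (t := G.edgeFinset) fun q hq => by simpa using ((G.mem_interedges_iff).1 hq).2.2]
  refine Finset.sum_congr rfl fun e he => congrArg Finset.card ?_
  ext q
  have hadj : s(q.1, q.2) = e → G.Adj q.1 q.2 := by
    rintro rfl
    simpa using he
  simp only [Finset.mem_filter, SimpleGraph.mem_interedges_iff, Finset.mem_product]
  tauto

end CardInteredges

section CardInteredgesConcentration

variable {n : ℕ} {p l : ℝ}

lemma exp_mul_sub_one_le (hl : |l| ≤ 1 / 2) {m : ℝ} (hm0 : 0 ≤ m) (hm2 : m ≤ 2) :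
    exp (l * m) - 1 ≤ m * (l + 2 * l ^ 2) := by
  have hlm : |l * m| ≤ 1 := by
    rw [abs_mul, abs_of_nonneg hm0]
    nlinarith [abs_nonneg l]
  have hexp := (abs_le.1 (Real.abs_exp_sub_one_sub_id_le hlm)).2
  nlinarith [mul_nonneg (mul_nonneg hm0 (sub_nonneg.2 hm2)) (sq_nonneg l)]

lemma pr_le_mul_cardInteredges_le_exp (hp : p ∈ Set.Icc (0 : ℝ) 1) (hl : |l| ≤ 1 / 2)
    (A B : Finset (Fin n)) (x : ℝ) :
    Pr n p (fun G => x ≤ l * cardInteredges G A B)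
      ≤ exp (-x + p * (cardInteredges ⊤ A B * (l + 2 * l ^ 2))) := by
  classical
  simp only [cardInteredges_eq_sum_pairMultiplicity, Nat.cast_sum, Finset.mul_sum, Finset.sum_mul]
  refine (pr_le_sum_le_exp hp (fun e => l * pairMultiplicity A B e) x).trans
    (Real.exp_le_exp.2 ?_)
  have := hp.1
  rw [← Finset.mul_sum]
  gcongr with e
  exact exp_mul_sub_one_le hl (Nat.cast_nonneg _) (mod_cast pairMultiplicity_le_two A B e)

lemma pr_le_cardInteredges_le_exp (hp : p ∈ Set.Icc (0 : ℝ) 1) (hl0 : 0 < l) (hl : l ≤ 1 / 2)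
    (A B : Finset (Fin n)) (x : ℝ) :
    Pr n p (fun G => x ≤ cardInteredges G A B)
      ≤ exp (-(l * x) + p * (A.card * B.card * (l + 2 * l ^ 2))) := by
  have := hp.1
  calc Pr n p (fun G => x ≤ cardInteredges G A B)
      ≤ Pr n p (fun G => l * x ≤ l * cardInteredges G A B) :=
        pr_mono hp fun G h => mul_le_mul_of_nonneg_left h hl0.le
    _ ≤ exp (-(l * x) + p * (cardInteredges ⊤ A B * (l + 2 * l ^ 2))) :=
        pr_le_mul_cardInteredges_le_exp hp (by rwa [abs_of_pos hl0]) A B _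
    _ ≤ _ := by
        gcongr
        exact_mod_cast cardInteredges_le_mul ⊤ A B

end CardInteredgesConcentration

/-! ### Pseudorandomness of the binomial random graph -/

section PseudoRandom

variable {n L : ℕ} {p ε δ : ℝ}

/-- The properties of `G_{n,p}` needed for rotations: degrees are at least about `np`, a nonempty
small set `A` sends fewer than `(ε / 2) n p |A|` edges into any set of size at most `5 |A|`, and a
set `B` of size at most `L` receives at most `δ p n L` edges more than expected from any set. -/
structure PseudoRandom (n L : ℕ) (p ε δ : ℝ) (G : SimpleGraph (Fin n)) : Prop where
  le_deg (v : Fin n) : (1 - δ) * (n * p) ≤ deg G v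
  small_lt (A B : Finset (Fin n)) : A.Nonempty → (A.card : ℝ) ≤ ε / 40 * n → B.card ≤ 5 * A.card →
    (cardInteredges G A B : ℝ) < ε / 2 * (n * p) * A.card
  large_le (A B : Finset (Fin n)) : B.card ≤ L →
    (cardInteredges G A B : ℝ) ≤ p * A.card * B.card + δ * p * n * L

lemma exp_neg_two_mul_log {x : ℝ} (hx : 0 < x) : exp (-(2 * log x)) = (x ^ 2)⁻¹ := by
  rw [Real.exp_neg, two_mul, Real.exp_add, Real.exp_log hx, sq]

lemma deg_top (v : Fin n) : deg ⊤ v = n - 1 := by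
  rw [deg, ← SimpleGraph.coe_neighborFinset, Set.ncard_coe_finset,
    SimpleGraph.card_neighborFinset_eq_degree, SimpleGraph.complete_graph_degree, Fintype.card_fin]

lemma pr_deg_lt_le (hp : p ∈ Set.Icc (0 : ℝ) 1) (hδ : 0 < δ) (hδ1 : δ ≤ 1)
    (hnp : 16 / δ ^ 2 * log n ≤ n * p) (v : Fin n) :
    Pr n p (fun G => deg G v < (1 - δ) * (n * p)) ≤ 3 / (n : ℝ) ^ 2 := by
  have hn : 1 ≤ n := v.pos
  have hn0 : (0 : ℝ) < n := mod_cast v.pos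
  have htop : (cardInteredges ⊤ {v} Finset.univ : ℝ) = n - 1 := by
    rw [cardInteredges_univ, Finset.sum_singleton, deg_top]
    push_cast [hn]
    ring
  have hlog : 2 * log n ≤ δ ^ 2 / 8 * (n * p) := by
    rw [div_mul_eq_mul_div, div_le_iff₀ (by positivity)] at hnp
    linarith
  have hexponent : -(-(δ / 4) * ((1 - δ) * (n * p)))
      + p * (cardInteredges ⊤ {v} Finset.univ * (-(δ / 4) + 2 * (-(δ / 4)) ^ 2))
      ≤ 1 + -(2 * log n) := by
    rw [htop]
    have : p * δ ≤ 1 := mul_le_one₀ hp.2 hδ.le hδ1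
    have : 0 ≤ p * δ ^ 2 := mul_nonneg hp.1 (sq_nonneg δ)
    nlinarith
  calc Pr n p (fun G => deg G v < (1 - δ) * (n * p))
      ≤ Pr n p (fun G => -(δ / 4) * ((1 - δ) * (n * p))
          ≤ -(δ / 4) * cardInteredges G {v} Finset.univ) := pr_mono hp fun G hG => by
        rw [cardInteredges_univ, Finset.sum_singleton]
        exact mul_le_mul_of_nonpos_left hG.le (by linarith)
    _ ≤ exp (1 + -(2 * log n)) :=
        (pr_le_mul_cardInteredges_le_exp hp
          (by rw [abs_neg, abs_of_pos (by positivity)]; linarith) _ _ _).trans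
          (Real.exp_le_exp.2 hexponent)
    _ = exp 1 * ((n : ℝ) ^ 2)⁻¹ := by rw [Real.exp_add, exp_neg_two_mul_log hn0]
    _ ≤ 3 / (n : ℝ) ^ 2 := by
        rw [div_eq_mul_inv]
        gcongr
        exact Real.exp_one_lt_three.le

lemma pr_exists_deg_lt_le (hp : p ∈ Set.Icc (0 : ℝ) 1) (hδ : 0 < δ) (hδ1 : δ ≤ 1)
    (hnp : 16 / δ ^ 2 * log n ≤ n * p) :
    Pr n p (fun G => ∃ v, deg G v < (1 - δ) * (n * p)) ≤ 3 / n :=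
  calc Pr n p (fun G => ∃ v, deg G v < (1 - δ) * (n * p))
      ≤ Pr n p (fun G => ∃ v ∈ Finset.univ, deg G v < (1 - δ) * (n * p)) :=
        pr_mono hp fun G ⟨v, hv⟩ => ⟨v, Finset.mem_univ v, hv⟩
    _ ≤ ∑ v, Pr n p (fun G => deg G v < (1 - δ) * (n * p)) := pr_exists_le_sum hp _ _
    _ ≤ ∑ _v : Fin n, 3 / (n : ℝ) ^ 2 :=
        Finset.sum_le_sum fun v _ => pr_deg_lt_le hp hδ hδ1 hnp v
    _ = 3 / n := by
        rw [Finset.sum_const, Finset.card_univ, Fintype.card_fin, nsmul_eq_mul]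
        field_simp

lemma pr_small_le (hp : p ∈ Set.Icc (0 : ℝ) 1) (hε : 0 < ε) (hn : 1 ≤ n)
    (hnp : 96 / ε * log n ≤ n * p) {A B : Finset (Fin n)} (hA : (A.card : ℝ) ≤ ε / 40 * n)
    (hB : B.card ≤ 5 * A.card) :
    Pr n p (fun G => ε / 2 * (n * p) * A.card ≤ cardInteredges G A B)
      ≤ ((n : ℝ) ^ 2)⁻¹ ^ A.card * ((n : ℝ) ^ 2)⁻¹ ^ B.card := by
  have hn1 : (1 : ℝ) ≤ n := mod_cast hn
  have hB' : (B.card : ℝ) ≤ 5 * A.card := mod_cast hB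
  have hlog : 0 ≤ log n := Real.log_nonneg hn1
  have hlog_le : 12 * log n ≤ ε / 8 * (n * p) := by
    rw [div_mul_eq_mul_div, div_le_iff₀ hε] at hnp
    linarith
  refine (pr_le_cardInteredges_le_exp hp one_half_pos le_rfl A B _).trans ?_
  rw [← exp_neg_two_mul_log (by linarith), ← Real.exp_nat_mul, ← Real.exp_nat_mul, ← Real.exp_add]
  refine Real.exp_le_exp.2 ?_
  have hmean : p * (A.card * B.card) ≤ p * (A.card * (5 * (ε / 40 * n))) := by
    have := hp.1
    gcongr
    linarith
  have hgain := mul_le_mul_of_nonneg_right hlog_le (Nat.cast_nonneg (α := ℝ) A.card)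
  have hlogB : log n * B.card ≤ log n * (5 * A.card) := by gcongr
  nlinarith

lemma sum_pow_card_mul_pow_card (n : ℕ) (x : ℝ) :
    ∑ q : Finset (Fin n) × Finset (Fin n), x ^ q.1.card * x ^ q.2.card = (x + 1) ^ (2 * n) := by
  have hsum : ∑ A : Finset (Fin n), x ^ A.card = (x + 1) ^ n := by
    simpa using Fintype.sum_pow_mul_eq_add_pow (Fin n) x 1
  rw [Fintype.sum_prod_type, two_mul, pow_add, ← hsum, Finset.sum_mul_sum]

lemma inv_sq_add_one_pow_sub_one_le (hn : 2 ≤ n) :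
    (((n : ℝ) ^ 2)⁻¹ + 1) ^ (2 * n) - 1 ≤ 4 / n := by
  have hn2 : (2 : ℝ) ≤ n := mod_cast hn
  have hle : |2 / (n : ℝ)| ≤ 1 := by
    rw [abs_of_nonneg (by positivity)]
    exact (div_le_one (by linarith)).2 hn2
  calc (((n : ℝ) ^ 2)⁻¹ + 1) ^ (2 * n) - 1 ≤ exp ((n : ℝ) ^ 2)⁻¹ ^ (2 * n) - 1 := by
        gcongr
        exact Real.add_one_le_exp _
    _ = exp (2 / n) - 1 := by
        rw [← Real.exp_nat_mul]
        push_cast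
        field_simp
    _ ≤ 2 * |2 / (n : ℝ)| := (le_abs_self _).trans (Real.abs_exp_sub_one_le hle)
    _ = 4 / n := by
        rw [abs_of_nonneg (by positivity)]
        ring

-- Excluding only `A = B = ∅`, the union bound over all pairs sums to `(1 + n⁻²) ^ (2n) - 1`.
lemma pr_exists_small_le (hp : p ∈ Set.Icc (0 : ℝ) 1) (hε : 0 < ε) (hn : 2 ≤ n)
    (hnp : 96 / ε * log n ≤ n * p) :
    Pr n p (fun G => ∃ A B : Finset (Fin n), A.Nonempty ∧ (A.card : ℝ) ≤ ε / 40 * n ∧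
      B.card ≤ 5 * A.card ∧ ε / 2 * (n * p) * A.card ≤ cardInteredges G A B) ≤ 4 / n := by
  classical
  let s : Finset (Finset (Fin n) × Finset (Fin n)) := Finset.univ.filter fun q =>
    q.1.Nonempty ∧ (q.1.card : ℝ) ≤ ε / 40 * n ∧ q.2.card ≤ 5 * q.1.card
  have hs : s ⊆ Finset.univ.erase (∅, ∅) := fun q hq => by
    have := (Finset.mem_filter.1 hq).2.1
    rw [Finset.mem_erase]
    exact ⟨fun h => by simp [h] at this, Finset.mem_univ q⟩
  calc _ ≤ Pr n p (fun G => ∃ q ∈ s, ε / 2 * (n * p) * q.1.card ≤ cardInteredges G q.1 q.2) :=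
        pr_mono hp fun G ⟨A, B, hA, hA', hB, h⟩ =>
          ⟨(A, B), Finset.mem_filter.2 ⟨Finset.mem_univ _, hA, hA', hB⟩, h⟩
    _ ≤ ∑ q ∈ s, ((n : ℝ) ^ 2)⁻¹ ^ q.1.card * ((n : ℝ) ^ 2)⁻¹ ^ q.2.card :=
        (pr_exists_le_sum hp s _).trans (Finset.sum_le_sum fun q hq => by
          obtain ⟨-, -, hA, hB⟩ := Finset.mem_filter.1 hq
          exact pr_small_le hp hε (by lia) hnp hA hB)
    _ ≤ ∑ q ∈ (Finset.univ : Finset (Finset (Fin n) × Finset (Fin n))).erase (∅, ∅),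
          ((n : ℝ) ^ 2)⁻¹ ^ q.1.card * ((n : ℝ) ^ 2)⁻¹ ^ q.2.card :=
        Finset.sum_le_sum_of_subset_of_nonneg hs fun q _ _ => by positivity
    _ ≤ 4 / n := by
        rw [Finset.sum_erase_eq_sub (Finset.mem_univ _), sum_pow_card_mul_pow_card]
        simpa using inv_sq_add_one_pow_sub_one_le hn

lemma pr_large_lt_le (hp : p ∈ Set.Icc (0 : ℝ) 1) (hδ : 0 < δ) (hδ1 : δ ≤ 1)
    (hpL : 24 / δ ^ 2 ≤ p * L) (A : Finset (Fin n)) {B : Finset (Fin n)} (hB : B.card ≤ L) :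
    Pr n p (fun G => p * A.card * B.card + δ * p * n * L < cardInteredges G A B)
      ≤ exp (-(3 * n)) := by
  have hA : (A.card : ℝ) ≤ n := by simpa using (Nat.cast_le (α := ℝ)).2 (Finset.card_le_univ A)
  have hgain : 3 * (n : ℝ) ≤ δ ^ 2 / 8 * (p * n * L) := by
    rw [div_le_iff₀ (by positivity)] at hpL
    nlinarith [Nat.cast_nonneg (α := ℝ) n]
  have hmean : δ ^ 2 / 8 * (p * (A.card * B.card)) ≤ δ ^ 2 / 8 * (p * (n * L)) := by
    have := hp.1
    gcongr
  calc Pr n p (fun G => p * A.card * B.card + δ * p * n * L < cardInteredges G A B)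
      ≤ Pr n p (fun G => p * A.card * B.card + δ * p * n * L ≤ cardInteredges G A B) :=
        pr_mono hp fun G hG => hG.le
    _ ≤ _ := pr_le_cardInteredges_le_exp hp (l := δ / 4) (by linarith) (by linarith) A B _
    _ ≤ exp (-(3 * n)) := Real.exp_le_exp.2 (by nlinarith)

lemma four_pow_mul_exp_neg_le (hn : 1 ≤ n) : (4 : ℝ) ^ n * exp (-(3 * n)) ≤ 1 / n := by
  have : (0 : ℝ) < n := mod_cast hn
  have hbase : (4 : ℝ) ≤ exp 2 := by
    calc (4 : ℝ) = 2 ^ 2 := by norm_num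
      _ ≤ exp 1 ^ 2 := by gcongr; linarith [Real.add_one_le_exp 1]
      _ = exp 2 := by rw [← Real.exp_nat_mul]; norm_num
  calc (4 : ℝ) ^ n * exp (-(3 * n)) ≤ exp 2 ^ n * exp (-(3 * n)) := by gcongr
    _ = 1 / exp n := by
        rw [← Real.exp_nat_mul, ← Real.exp_add, one_div, ← Real.exp_neg]
        ring_nf
    _ ≤ 1 / n := by
        gcongr
        linarith [Real.add_one_le_exp (n : ℝ)]

lemma pr_exists_large_lt_le (hp : p ∈ Set.Icc (0 : ℝ) 1) (hδ : 0 < δ) (hδ1 : δ ≤ 1)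
    (hn : 1 ≤ n) (hpL : 24 / δ ^ 2 ≤ p * L) :
    Pr n p (fun G => ∃ A B : Finset (Fin n), B.card ≤ L ∧
      p * A.card * B.card + δ * p * n * L < cardInteredges G A B) ≤ 1 / n := by
  let s : Finset (Finset (Fin n) × Finset (Fin n)) := Finset.univ.filter fun q => q.2.card ≤ L
  have hs : (s.card : ℝ) ≤ 4 ^ n := by
    have hcard : s.card ≤ 4 ^ n := (Finset.card_filter_le _ _).trans_eq (by
      simp [← mul_pow])
    exact_mod_cast hcard
  calc _ ≤ Pr n p (fun G => ∃ q ∈ s,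
          p * q.1.card * q.2.card + δ * p * n * L < cardInteredges G q.1 q.2) :=
        pr_mono hp fun G ⟨A, B, hB, h⟩ =>
          ⟨(A, B), Finset.mem_filter.2 ⟨Finset.mem_univ _, hB⟩, h⟩
    _ ≤ ∑ _q ∈ s, exp (-(3 * n)) :=
        (pr_exists_le_sum hp s _).trans (Finset.sum_le_sum fun q hq =>
          pr_large_lt_le hp hδ hδ1 hpL _ (Finset.mem_filter.1 hq).2)
    _ ≤ 4 ^ n * exp (-(3 * n)) := by
        rw [Finset.sum_const, nsmul_eq_mul]
        gcongr
    _ ≤ 1 / n := four_pow_mul_exp_neg_le hn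

lemma le_pr_pseudoRandom (hp : p ∈ Set.Icc (0 : ℝ) 1) (hε : 0 < ε) (hδ : 0 < δ) (hδ1 : δ ≤ 1)
    (hn : 2 ≤ n) (hnp : 16 / δ ^ 2 * log n ≤ n * p) (hnp' : 96 / ε * log n ≤ n * p)
    (hpL : 24 / δ ^ 2 ≤ p * L) : 1 - 8 / n ≤ Pr n p (PseudoRandom n L p ε δ) := by
  have hfail : Pr n p (fun G => ¬ PseudoRandom n L p ε δ G) ≤ 3 / n + (4 / n + 1 / n) :=
    calc _ ≤ Pr n p _ := pr_mono hp fun G hG => by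
          by_contra hcon
          push Not at hcon
          exact hG ⟨hcon.1, hcon.2.1, hcon.2.2⟩
      _ ≤ _ := (pr_or_le hp _ _).trans <| add_le_add (pr_exists_deg_lt_le hp hδ hδ1 hnp) <|
        (pr_or_le hp _ _).trans <| add_le_add (pr_exists_small_le hp hε hn hnp')
          (pr_exists_large_lt_le hp hδ hδ1 (by lia) hpL)
  rw [pr_eq_one_sub]
  linarith [show (8 : ℝ) / n = 3 / n + (4 / n + 1 / n) by ring]

end PseudoRandom

/-! ### Consecutive entries of lists -/

section Lists

variable {l w : List V} {x y y' : V}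

lemma pair_infix_iff : [x, y] <:+: l ↔ ∃ i : ℕ, l[i]? = some x ∧ l[i + 1]? = some y := by
  constructor
  · rintro ⟨s, t, rfl⟩
    exact ⟨s.length, by simp, by simp⟩
  · rintro ⟨i, hx, hy⟩
    obtain ⟨hi, rfl⟩ := List.getElem?_eq_some_iff.1 hx
    obtain ⟨hi', rfl⟩ := List.getElem?_eq_some_iff.1 hy
    have hdrop : l.drop i = l[i] :: l[i + 1] :: l.drop (i + 2) := by
      rw [List.drop_eq_getElem_cons hi, List.drop_eq_getElem_cons hi']
    have hprefix : [l[i], l[i + 1]] <+: l.drop i := hdrop ▸ List.prefix_append [_, _] _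
    exact hprefix.isInfix.trans (List.drop_suffix i l).isInfix

lemma mem_zip_tail_iff : (x, y) ∈ l.zip l.tail ↔ [x, y] <:+: l := by
  simp [pair_infix_iff, List.mem_iff_getElem?, List.getElem?_zip_eq_some]

lemma listGraph_adj : (listGraph l).Adj x y ↔ ([x, y] <:+: l ∨ [y, x] <:+: l) ∧ x ≠ y := by
  simp only [listGraph, SimpleGraph.fromEdgeSet_adj, Set.mem_ofPred_eq, Prod.exists, Sym2.eq_iff,
    mem_zip_tail_iff]
  grind

lemma index_unique (hl : l.Nodup) {i j : ℕ} (hi : l[i]? = some x) (hj : l[j]? = some x) : i = j :=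
  (List.getElem?_inj (List.getElem?_eq_some_iff.1 hi).1 hl).1 (hi.trans hj.symm)

lemma pair_infix_right_unique (hl : l.Nodup) (h : [x, y] <:+: l) (h' : [x, y'] <:+: l) :
    y = y' := by
  obtain ⟨i, hx, hy⟩ := pair_infix_iff.1 h
  obtain ⟨j, hx', hy'⟩ := pair_infix_iff.1 h'
  obtain rfl : i = j := index_unique hl hx hx'
  exact Option.some_injective _ (hy.symm.trans hy')

lemma pair_infix_asymm (hl : l.Nodup) (h : [x, y] <:+: l) : ¬ [y, x] <:+: l := fun h' => by
  obtain ⟨i, hx, hy⟩ := pair_infix_iff.1 h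
  obtain ⟨j, hy', hx'⟩ := pair_infix_iff.1 h'
  have := index_unique hl hx hx'
  have := index_unique hl hy hy'
  lia

lemma ne_of_pair_infix (hl : l.Nodup) (h : [x, y] <:+: l) : x ≠ y := by
  simpa using hl.sublist h.sublist

lemma exists_pair_infix_left (hx : x ∈ l) (hhead : l.head? ≠ some x) : ∃ c, [c, x] <:+: l := by
  obtain ⟨s, t, rfl⟩ := List.append_of_mem hx
  rcases List.eq_nil_or_concat s with rfl | ⟨s', c, rfl⟩
  · simp at hhead
  · exact ⟨c, s', t, by simp⟩

lemma exists_pair_infix_right (hx : x ∈ l) (hlast : l.getLast? ≠ some x) :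
    ∃ c, [x, c] <:+: l := by
  obtain ⟨s, t, rfl⟩ := List.append_of_mem hx
  rcases t with _ | ⟨c, t⟩
  · simp at hlast
  · exact ⟨c, s, t, by simp⟩

lemma getLast?_ne_of_pair_infix (hl : l.Nodup) (h : [x, y] <:+: l) : l.getLast? ≠ some x := by
  obtain ⟨i, hx, hy⟩ := pair_infix_iff.1 h
  have hlen := (List.getElem?_eq_some_iff.1 hy).1
  rw [List.getLast?_eq_getElem?]
  intro hlast
  have := index_unique hl hx hlast
  lia

lemma infix_append_cons_cases {pre suf : List V} (h : w <:+: pre ++ x :: suf) :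
    w <:+: pre ∨ w <:+: x :: suf ∨
      ∃ s c t, w = s ++ c :: x :: t ∧ pre.getLast? = some c := by
  rcases List.infix_append_iff.1 h with h | h | ⟨t₁, t₂, rfl, h₁, h₂⟩
  · exact Or.inl h
  · exact Or.inr (Or.inl h)
  · rcases List.eq_nil_or_concat t₁ with rfl | ⟨s, c, rfl⟩
    · exact Or.inr (Or.inl h₂.isInfix)
    · rcases t₂ with _ | ⟨b, t⟩
      · exact Or.inl (by simpa using h₁.isInfix)
      · obtain ⟨rfl, -⟩ := List.cons_prefix_cons.1 h₂
        obtain ⟨r, rfl⟩ := h₁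
        exact Or.inr (Or.inr ⟨s, c, t, by simp, by simp⟩)

open Classical in
/-- The entries of `w` that directly follow an element of `T`. -/
noncomputable def follow (T : Finset V) (w : List V) : Finset V :=
  w.toFinset.filter fun x => ∃ y ∈ T, [y, x] <:+: w

lemma mem_follow {T : Finset V} : x ∈ follow T w ↔ ∃ y ∈ T, [y, x] <:+: w := by
  simp only [follow, Finset.mem_filter, List.mem_toFinset, and_iff_right_iff_imp]
  exact fun ⟨y, _, h⟩ => h.subset (by simp)

lemma card_follow_le [DecidableEq V] (hw : w.Nodup) (T : Finset V) :
    (follow T w).card ≤ (T ∩ w.toFinset).card := by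
  refine Finset.card_le_card_of_forall_subsingleton (fun x y => [y, x] <:+: w) (fun x hx => ?_)
    fun y _ x hx x' hx' => pair_infix_right_unique hw hx.2 hx'.2
  obtain ⟨y, hy, h⟩ := mem_follow.1 hx
  exact ⟨y, Finset.mem_inter.2 ⟨hy, List.mem_toFinset.2 (h.subset (by simp))⟩, h⟩

/-- The `i`-th segment when `P` is cut into consecutive segments of length `L`; the last nonempty
one may be shorter. -/
def segment (P : List V) (L i : ℕ) : List V := (P.drop (i * L)).take L

lemma segment_infix (P : List V) (L i : ℕ) : segment P L i <:+: P :=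
  (List.take_prefix _ _).isInfix.trans (List.drop_suffix _ _).isInfix

lemma length_segment_le (P : List V) (L i : ℕ) : (segment P L i).length ≤ L :=
  List.length_take_le _ _

variable {P : List V} {L i j : ℕ}

lemma mem_segment_iff (hL : 0 < L) : x ∈ segment P L i ↔ ∃ k : ℕ, P[k]? = some x ∧ k / L = i := by
  simp only [segment, List.mem_iff_getElem?, List.getElem?_take, List.getElem?_drop]
  constructor
  · rintro ⟨k, hk⟩
    split_ifs at hk with hkL
    exact ⟨_, hk, by rw [add_comm, Nat.add_mul_div_right _ _ hL, Nat.div_eq_of_lt hkL, zero_add]⟩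
  · rintro ⟨k, hk, rfl⟩
    refine ⟨k % L, ?_⟩
    rwa [if_pos (Nat.mod_lt k hL), Nat.div_add_mod']

lemma exists_mem_segment (hL : 0 < L) (hx : x ∈ P) :
    ∃ i ∈ Finset.range (P.length / L + 1), x ∈ segment P L i := by
  obtain ⟨k, hk⟩ := List.mem_iff_getElem?.1 hx
  have hlt := (List.getElem?_eq_some_iff.1 hk).1
  exact ⟨k / L, Finset.mem_range_succ_iff.2 (Nat.div_le_div_right hlt.le),
    (mem_segment_iff hL).2 ⟨k, hk, rfl⟩⟩

lemma segment_disjoint (hL : 0 < L) (hP : P.Nodup) (hij : i ≠ j) :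
    (segment P L i).Disjoint (segment P L j) := by
  intro x hi hj
  obtain ⟨k, hk, rfl⟩ := (mem_segment_iff hL).1 hi
  obtain ⟨k', hk', rfl⟩ := (mem_segment_iff hL).1 hj
  exact hij (congrArg (· / L) (index_unique hP hk hk'))

end Lists

/-! ### Rotations -/

section Rotations

variable {G Γ : SimpleGraph V} {P l l' w : List V} {t : ℕ} {a b c v x y : V}

namespace IsRotation

lemma exists_reverse_prefix (h : IsRotation G P l l') :
    ∃ pre b suf, l = pre ++ b :: suf ∧ l' = pre.reverse ++ b :: suf ∧
      ∀ a ∈ pre.head?, G.Adj a b := by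
  obtain ⟨a, c, b, t₁, t₂, rfl, hab, -, rfl⟩ := h
  exact ⟨a :: t₁ ++ [c], b, t₂, by simp, rfl, by simpa using hab⟩

lemma perm (h : IsRotation G P l l') : l'.Perm l := by
  obtain ⟨pre, b, suf, rfl, rfl, -⟩ := h.exists_reverse_prefix
  exact (List.reverse_perm pre).append_right _

lemma getLast? (h : IsRotation G P l l') : l'.getLast? = l.getLast? := by
  obtain ⟨pre, b, suf, rfl, rfl, -⟩ := h.exists_reverse_prefix
  simp [List.getLast?_append, List.getLast?_cons]

lemma isPathOn (hG : G ≤ Γ) (h : IsRotation G P l l') (hl : IsPathOn Γ l) : IsPathOn Γ l' := by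
  refine ⟨fun hnil => hl.1 (List.nil_perm.1 (hnil ▸ h.perm)), h.perm.nodup_iff.2 hl.2.1, ?_⟩
  have hchain : List.IsChain Γ.Adj l := hl.2.2
  change List.IsChain Γ.Adj l'
  obtain ⟨pre, b, suf, rfl, rfl, hadj⟩ := h.exists_reverse_prefix
  obtain ⟨hpre, hsuf, -⟩ := List.isChain_append.1 hchain
  refine List.isChain_append.2 ⟨List.isChain_reverse.2 (hpre.imp fun _ _ h => h.symm), hsuf, ?_⟩
  simp only [List.getLast?_reverse, List.head?_cons, Option.mem_some]
  rintro a ha _ rfl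
  exact hG (hadj a ha)

lemma pair_infix_or_head?_eq (hrot : IsRotation G P l l') (hxy : [x, y] <:+: l) :
    [x, y] <:+: l' ∨ [y, x] <:+: l' ∨ l'.head? = some x := by
  obtain ⟨pre, b, suf, rfl, rfl, -⟩ := hrot.exists_reverse_prefix
  rcases infix_append_cons_cases hxy with h | h | ⟨s, c, u, hw, hc⟩
  · exact Or.inr (Or.inl
      (List.IsInfix.trans (List.reverse_infix.2 h) (List.prefix_append _ _).isInfix))
  · exact Or.inl (h.trans (List.suffix_append _ _).isInfix)
  · obtain ⟨rfl, rfl⟩ : s = [] ∧ x = c := by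
      rcases s with _ | ⟨s₀, _ | ⟨s₁, s⟩⟩ <;> simp_all
    exact Or.inr (Or.inr (by simp [hc]))

end IsRotation

lemma rotSet_induction {motive : List V → Prop} (base : motive P)
    (step : ∀ l l', motive l → IsRotation G P l l' → motive l') : ∀ l ∈ rotSet G P t, motive l := by
  induction t with
  | zero => rintro l rfl; exact base
  | succ t ih =>
    rintro l (hl | ⟨l₀, hl₀, hrot⟩)
    exacts [ih l hl, step l₀ l (ih l₀ hl₀) hrot]

lemma rotSet_subset_succ (G : SimpleGraph V) (P : List V) (t : ℕ) :
    rotSet G P t ⊆ rotSet G P (t + 1) :=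
  Set.subset_union_left

lemma self_mem_rotSet (G : SimpleGraph V) (P : List V) (t : ℕ) : P ∈ rotSet G P t :=
  monotone_nat_of_le_succ (rotSet_subset_succ G P) t.zero_le rfl

lemma perm_of_mem_rotSet (hl : l ∈ rotSet G P t) : l.Perm P :=
  rotSet_induction (motive := (List.Perm · P)) (.refl P) (fun _ _ h hrot => hrot.perm.trans h) l hl

lemma getLast?_of_mem_rotSet (hl : l ∈ rotSet G P t) : l.getLast? = P.getLast? :=
  rotSet_induction (motive := (List.getLast? · = P.getLast?)) rfl
    (fun _ _ h hrot => hrot.getLast?.trans h) l hl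

lemma IsLongestPathOn.of_mem_rotSet (hP : IsLongestPathOn Γ P) (hG : G ≤ Γ)
    (hl : l ∈ rotSet G P t) : IsLongestPathOn Γ l :=
  ⟨rotSet_induction hP.1 (fun _ _ h hrot => hrot.isPathOn hG h) l hl,
    fun l' hl' => (hP.2 l' hl').trans_eq (perm_of_mem_rotSet hl).length_eq.symm⟩

lemma IsLongestPathOn.mem_of_adj_head (hl : IsLongestPathOn Γ l) (ha : l.head? = some a)
    (hav : Γ.Adj a v) : v ∈ l := by
  by_contra hv
  have hchain : List.IsChain Γ.Adj l := hl.1.2.2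
  have hpath : IsPathOn Γ (v :: l) := by
    refine ⟨List.cons_ne_nil v l, List.nodup_cons.2 ⟨hv, hl.1.2.1⟩, ?_⟩
    exact List.isChain_cons.2 ⟨by simpa [ha] using hav.symm, hchain⟩
  simpa using hl.2 _ hpath

/-- A segment `w` of a path is broken in `l` if `l` traverses it in neither direction. -/
def Breaks (l w : List V) : Prop := ¬ w <:+: l ∧ ¬ w.reverse <:+: l

lemma infix_or_mem_of_infix_append {pre suf : List V} (h : w <:+: pre ++ b :: suf) :
    w <:+: pre ∨ w <:+: b :: suf ∨ b ∈ w := by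
  rcases infix_append_cons_cases h with h | h | ⟨s, c, t, rfl, -⟩
  exacts [Or.inl h, Or.inr (Or.inl h), Or.inr (Or.inr (by simp))]

lemma IsRotation.exists_mem_of_breaks (h : IsRotation G P l l') :
    ∃ b, ∀ w, Breaks l' w → Breaks l w ∨ b ∈ w := by
  obtain ⟨pre, b, suf, rfl, rfl, -⟩ := h.exists_reverse_prefix
  have hkeep : ∀ {w : List V}, w <:+: pre ++ b :: suf →
      w <:+: pre.reverse ++ b :: suf ∨ w.reverse <:+: pre.reverse ++ b :: suf ∨ b ∈ w := by
    intro w hw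
    rcases infix_or_mem_of_infix_append hw with h | h | h
    · exact Or.inr (Or.inl ((List.reverse_infix.2 h).trans (List.prefix_append _ _).isInfix))
    · exact Or.inl (h.trans (List.suffix_append _ _).isInfix)
    · exact Or.inr (Or.inr h)
  refine ⟨b, fun w hw => or_iff_not_imp_right.2 fun hb => ⟨fun hwl => ?_, fun hwl => ?_⟩⟩
  · rcases hkeep hwl with h | h | h
    exacts [hw.1 h, hw.2 h, hb h]
  · rcases hkeep hwl with h | h | h
    exacts [hw.2 h, hw.1 (w.reverse_reverse ▸ h), hb (List.mem_reverse.1 h)]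

open Classical in
lemma card_breaks_le {ι : Type*} {I : Finset ι} {s : ι → List V} (hinfix : ∀ i ∈ I, s i <:+: P)
    (hdisj : (I : Set ι).Pairwise fun i j => (s i).Disjoint (s j)) :
    ∀ l ∈ rotSet G P t, (I.filter fun i => Breaks l (s i)).card ≤ t := by
  induction t with
  | zero =>
    rintro l rfl
    simp only [nonpos_iff_eq_zero, Finset.card_eq_zero, Finset.filter_eq_empty_iff]
    exact fun i hi h => h.1 (hinfix i hi)
  | succ t ih =>
    rintro l (hl | ⟨l₀, hl₀, hrot⟩)
    · exact (ih l hl).trans t.le_succ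
    · obtain ⟨b, hb⟩ := hrot.exists_mem_of_breaks
      have hone : (I.filter fun i => b ∈ s i).card ≤ 1 := by
        simp only [Finset.card_le_one, Finset.mem_filter]
        rintro i ⟨hi, hbi⟩ j ⟨hj, hbj⟩
        by_contra hij
        exact hdisj hi hj hij hbi hbj
      calc (I.filter fun i => Breaks l (s i)).card
          ≤ (I.filter fun i => Breaks l₀ (s i) ∨ b ∈ s i).card :=
            Finset.card_le_card (Finset.monotone_filter_right _ fun i _ hi => hb _ hi)
        _ ≤ t + 1 := by
            rw [Finset.filter_or]
            exact (Finset.card_union_le _ _).trans (add_le_add (ih _ hl₀) hone)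

variable [Finite V]

/-- The set `Rset G P t` as a finset. -/
noncomputable def endpoints (G : SimpleGraph V) (P : List V) (t : ℕ) : Finset V :=
  (Rset G P t).toFinite.toFinset

lemma mem_endpoints : x ∈ endpoints G P t ↔ ∃ l ∈ rotSet G P t, l.head? = some x :=
  Set.Finite.mem_toFinset _

lemma ncard_Rset : (Rset G P t).ncard = (endpoints G P t).card :=
  Set.ncard_eq_toFinset_card _ _

lemma endpoints_subset_succ (G : SimpleGraph V) (P : List V) (t : ℕ) :
    endpoints G P t ⊆ endpoints G P (t + 1) := fun x hx => by
  obtain ⟨l, hl, h⟩ := mem_endpoints.1 hx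
  exact mem_endpoints.2 ⟨l, rotSet_subset_succ G P t hl, h⟩

lemma endpoints_mono (G : SimpleGraph V) (P : List V) : Monotone (endpoints G P) :=
  monotone_nat_of_le_succ (endpoints_subset_succ G P)

lemma mem_endpoints_succ (hl : l ∈ rotSet G P t) (ha : l.head? = some a) (hab : G.Adj a b)
    (hcb : [c, b] <:+: l) (hP : (listGraph P).Adj c b) : c ∈ endpoints G P (t + 1) := by
  obtain ⟨s, u, rfl⟩ := hcb
  rcases s with _ | ⟨a', s⟩
  · exact endpoints_subset_succ G P t (mem_endpoints.2 ⟨_, hl, by simp⟩)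
  · obtain rfl : a' = a := by simpa using ha
    exact mem_endpoints.2 ⟨(a' :: s ++ [c]).reverse ++ b :: u,
      Or.inr ⟨_, hl, a', c, b, s, u, by simp, hab, hP, rfl⟩, by simp⟩

lemma pair_infix_or_mem_endpoints (hxy : [x, y] <:+: P) (hl : l ∈ rotSet G P t) :
    [x, y] <:+: l ∨ [y, x] <:+: l ∨ x ∈ endpoints G P t ∨ y ∈ endpoints G P t := by
  induction t generalizing l with
  | zero => rw [Set.mem_singleton_iff.1 hl]; exact Or.inl hxy
  | succ t ih =>
    have hmono := endpoints_subset_succ G P t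
    rcases id hl with hl₀ | ⟨l₀, hl₀, hrot⟩
    · exact (ih hl₀).imp_right (Or.imp_right (Or.imp (@hmono _) (@hmono _)))
    · have hhead : ∀ z, l.head? = some z → z ∈ endpoints G P (t + 1) :=
        fun z hz => mem_endpoints.2 ⟨l, hl, hz⟩
      rcases ih hl₀ with h | h | h | h
      · rcases hrot.pair_infix_or_head?_eq h with h | h | h <;> grind
      · rcases hrot.pair_infix_or_head?_eq h with h | h | h <;> grind
      · exact Or.inr (Or.inr (Or.inl (hmono h)))
      · exact Or.inr (Or.inr (Or.inr (hmono h)))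

/-- Pósa's observation: a vertex that never was an endpoint keeps its neighbours on `P`, unless one
of them was an endpoint. -/
lemma mem_endpoints_or_exists_pair_infix (hG : G ≤ Γ) (hP : IsLongestPathOn Γ P)
    (ha : a ∈ endpoints G P t) (hav : G.Adj a v) :
    v ∈ endpoints G P t ∨ ∃ c ∈ endpoints G P (t + 1), [c, v] <:+: P ∨ [v, c] <:+: P := by
  refine or_iff_not_imp_left.2 fun hv => ?_
  obtain ⟨l, hl, hal⟩ := mem_endpoints.1 ha
  have hlong := hP.of_mem_rotSet hG hl
  have hPnd := hP.1.2.1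
  have hlnd := hlong.1.2.1
  have hvl : v ∈ l := hlong.mem_of_adj_head hal (hG hav)
  have hvP : v ∈ P := (perm_of_mem_rotSet hl).mem_iff.1 hvl
  have hhead : ∀ l' ∈ rotSet G P t, l'.head? ≠ some v :=
    fun l' hl' h => hv (mem_endpoints.2 ⟨l', hl', h⟩)
  have hpred : ∀ {c}, [c, v] <:+: l → [c, v] <:+: P ∨ [v, c] <:+: P → c ∈ endpoints G P (t + 1) :=
    fun hcl hcP => mem_endpoints_succ hl hal hav hcl
      (listGraph_adj.2 ⟨hcP, ne_of_pair_infix hlnd hcl⟩)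
  obtain ⟨u, hu⟩ := exists_pair_infix_left hvP (hhead P (self_mem_rotSet G P t))
  rcases pair_infix_or_mem_endpoints hu hl with h | h | h | h
  · exact ⟨u, hpred h (Or.inl hu), Or.inl hu⟩
  · have hlast : P.getLast? ≠ some v :=
      getLast?_of_mem_rotSet hl ▸ getLast?_ne_of_pair_infix hlnd h
    obtain ⟨u', hu'⟩ := exists_pair_infix_right hvP hlast
    rcases pair_infix_or_mem_endpoints hu' hl with h' | h' | h' | h'
    · obtain rfl : u = u' := pair_infix_right_unique hlnd h h'
      exact absurd hu' (pair_infix_asymm hPnd hu)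
    · exact ⟨u', hpred h' (Or.inr hu'), Or.inr hu'⟩
    · exact absurd h' hv
    · exact ⟨u', endpoints_subset_succ G P t h', Or.inr hu'⟩
  · exact ⟨u, endpoints_subset_succ G P t h, Or.inl hu⟩
  · exact absurd h hv

lemma exists_card_le_forall_adj_mem (hG : G ≤ Γ) (hP : IsLongestPathOn Γ P) (t : ℕ) :
    ∃ N : Finset V, N.card ≤ (endpoints G P t).card + 2 * (endpoints G P (t + 1)).card ∧
      ∀ a ∈ endpoints G P t, ∀ v, G.Adj a v → v ∈ N := by
  classical
  refine ⟨endpoints G P t ∪ (follow (endpoints G P (t + 1)) P ∪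
    follow (endpoints G P (t + 1)) P.reverse), ?_, fun a ha v hav => ?_⟩
  · have hnd := hP.1.2.1
    have hfollow : ∀ w : List V, w.Nodup →
        (follow (endpoints G P (t + 1)) w).card ≤ (endpoints G P (t + 1)).card := fun w hw =>
      (card_follow_le hw _).trans (Finset.card_le_card Finset.inter_subset_left)
    calc _ ≤ _ := (Finset.card_union_le _ _).trans (add_le_add_right (Finset.card_union_le _ _) _)
      _ ≤ _ := by linarith [hfollow P hnd, hfollow P.reverse (List.nodup_reverse.2 hnd)]
  · have hreverse : ∀ {c}, [v, c] <:+: P → [c, v] <:+: P.reverse := fun h => List.reverse_infix.2 h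
    simp only [Finset.mem_union, mem_follow]
    rcases mem_endpoints_or_exists_pair_infix hG hP ha hav with h | ⟨c, hc, h | h⟩
    exacts [Or.inl h, Or.inr (Or.inl ⟨c, hc, h⟩), Or.inr (Or.inr ⟨c, hc, hreverse h⟩)]

end Rotations

/-! ### Growth of the set of endpoints -/

section SegmentCount

variable {G Γ : SimpleGraph V} {P l w : List V} {L t : ℕ} {p κ : ℝ} {a x : V} {A T : Finset V}
  {f : V → List V}

open Classical in
/-- The entries of `w` that are first in `w` or directly follow an element of `T`. -/
noncomputable def nextSet (T : Finset V) (w : List V) : Finset V := w.head?.toFinset ∪ follow T w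

lemma mem_nextSet : x ∈ nextSet T w ↔ w.head? = some x ∨ ∃ y ∈ T, [y, x] <:+: w := by
  simp only [nextSet, Finset.mem_union, Option.mem_toFinset, Option.mem_def, mem_follow]

lemma card_nextSet_le [DecidableEq V] (hw : w.Nodup) (T : Finset V) :
    (nextSet T w).card ≤ (T ∩ w.toFinset).card + 1 := by
  have hhead : w.head?.toFinset.card ≤ 1 := by cases w <;> simp
  have hfollow := card_follow_le hw T
  classical
  calc (nextSet T w).card ≤ w.head?.toFinset.card + (follow T w).card := by
        unfold nextSet; convert Finset.card_union_le _ _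
    _ ≤ (T ∩ w.toFinset).card + 1 := by lia

lemma card_nextSet_le_length (T : Finset V) (w : List V) : (nextSet T w).card ≤ w.length := by
  classical
  refine (Finset.card_le_card fun x hx => List.mem_toFinset.2 ?_).trans w.toFinset_card_le
  rcases mem_nextSet.1 hx with h | ⟨y, -, h⟩
  exacts [List.mem_of_mem_head? h, h.subset (by simp)]

lemma sum_card_inter_toFinset_le [DecidableEq V] {ι : Type*} {I : Finset ι} {s : ι → List V}
    (hdisj : (I : Set ι).Pairwise fun i j => (s i).Disjoint (s j)) (T : Finset V) :
    ∑ i ∈ I, (T ∩ (s i).toFinset).card ≤ T.card := by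
  rw [← Finset.card_biUnion fun i hi j hj hij => ?_]
  · exact Finset.card_le_card (Finset.biUnion_subset.2 fun _ _ => Finset.inter_subset_left)
  · exact (List.disjoint_toFinset_iff_disjoint.2 (hdisj hi hj hij)).mono
      Finset.inter_subset_right Finset.inter_subset_right

open Classical in
lemma sum_card_breaks_le {ι : Type*} {I : Finset ι} {s : ι → List V}
    (hinfix : ∀ i ∈ I, s i <:+: P)
    (hdisj : (I : Set ι).Pairwise fun i j => (s i).Disjoint (s j))
    (hf : ∀ a ∈ A, f a ∈ rotSet G P t) :
    ∑ i ∈ I, (A.filter fun a => Breaks (f a) (s i)).card ≤ t * A.card := by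
  calc ∑ i ∈ I, (A.filter fun a => Breaks (f a) (s i)).card
      = ∑ a ∈ A, (I.filter fun i => Breaks (f a) (s i)).card :=
        Finset.sum_card_bipartiteAbove_eq_sum_card_bipartiteBelow fun i a => Breaks (f a) (s i)
    _ ≤ A.card • t :=
        Finset.sum_le_card_nsmul _ _ _ fun a ha => card_breaks_le hinfix hdisj _ (hf a ha)
    _ = t * A.card := by rw [smul_eq_mul, mul_comm]

variable [Finite V]

lemma mem_nextSet_of_adj (hl : l ∈ rotSet G P t) (ha : l.head? = some a) (hax : G.Adj a x)
    (hwl : w <:+: l) (hnd : w.Nodup) (hwP : w <:+: P ∨ w.reverse <:+: P) (hx : x ∈ w) :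
    x ∈ nextSet (endpoints G P (t + 1)) w := by
  refine mem_nextSet.2 (or_iff_not_imp_left.2 fun hhead => ?_)
  obtain ⟨c, hc⟩ := exists_pair_infix_left hx hhead
  refine ⟨c, mem_endpoints_succ hl ha hax (hc.trans hwl) (listGraph_adj.2 ⟨?_, ?_⟩), hc⟩
  · exact hwP.imp hc.trans (List.IsInfix.trans (List.reverse_infix.2 hc))
  · exact ne_of_pair_infix hnd hc

open Classical in
/-- The vertices `a` whose path `f a` traverses `w` forwards, backwards or not at all are treated
separately, since `a` can only send edges to `nextSet _ w` or `nextSet _ w.reverse` in the first two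
cases. -/
lemma cardInteredges_segment_le_add (hf : ∀ a ∈ A, f a ∈ rotSet G P t ∧ (f a).head? = some a)
    (hP : P.Nodup) (hw : w <:+: P) :
    cardInteredges G A w.toFinset ≤
      cardInteredges G (A.filter fun a => w <:+: f a) (nextSet (endpoints G P (t + 1)) w) +
      cardInteredges G (A.filter fun a => ¬ w <:+: f a ∧ w.reverse <:+: f a)
        (nextSet (endpoints G P (t + 1)) w.reverse) +
      cardInteredges G (A.filter fun a => Breaks (f a) w) w.toFinset := by
  set A₁ := A.filter fun a => w <:+: f a
  set A₂ := A.filter fun a => ¬ w <:+: f a ∧ w.reverse <:+: f a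
  set A₃ := A.filter fun a => Breaks (f a) w
  have hnd := hw.sublist.nodup hP
  have hcover : A ⊆ A₁ ∪ A₂ ∪ A₃ := fun a ha => by
    by_cases h₁ : w <:+: f a
    · exact Finset.mem_union_left _ (Finset.mem_union_left _ (Finset.mem_filter.2 ⟨ha, h₁⟩))
    by_cases h₂ : w.reverse <:+: f a
    · exact Finset.mem_union_left _ (Finset.mem_union_right _ (Finset.mem_filter.2 ⟨ha, h₁, h₂⟩))
    · exact Finset.mem_union_right _ (Finset.mem_filter.2 ⟨ha, h₁, h₂⟩)
  have hforward : cardInteredges G A₁ w.toFinset ≤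
      cardInteredges G A₁ (nextSet (endpoints G P (t + 1)) w) := by
    refine cardInteredges_le_of_adj fun a ha x hx hax => ⟨ha, ?_, hax⟩
    obtain ⟨haA, hwf⟩ := Finset.mem_filter.1 ha
    exact mem_nextSet_of_adj (hf a haA).1 (hf a haA).2 hax hwf hnd (Or.inl hw)
      (List.mem_toFinset.1 hx)
  have hbackward : cardInteredges G A₂ w.toFinset ≤
      cardInteredges G A₂ (nextSet (endpoints G P (t + 1)) w.reverse) := by
    refine cardInteredges_le_of_adj fun a ha x hx hax => ⟨ha, ?_, hax⟩
    obtain ⟨haA, -, hwf⟩ := Finset.mem_filter.1 ha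
    exact mem_nextSet_of_adj (hf a haA).1 (hf a haA).2 hax hwf (List.nodup_reverse.2 hnd)
      (Or.inr (by rwa [List.reverse_reverse])) (List.mem_reverse.2 (List.mem_toFinset.1 hx))
  calc cardInteredges G A w.toFinset
      ≤ cardInteredges G (A₁ ∪ A₂ ∪ A₃) w.toFinset := by gcongr
    _ ≤ cardInteredges G A₁ w.toFinset + cardInteredges G A₂ w.toFinset +
          cardInteredges G A₃ w.toFinset :=
        (cardInteredges_union_left_le G _ _ _).trans
          (add_le_add_left (cardInteredges_union_left_le G _ _ _) _)
    _ ≤ _ := by gcongr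

open Classical in
lemma cardInteredges_segment_le (hp : 0 ≤ p)
    (hlarge : ∀ A B : Finset V, B.card ≤ L → (cardInteredges G A B : ℝ) ≤ p * A.card * B.card + κ)
    (hf : ∀ a ∈ A, f a ∈ rotSet G P t ∧ (f a).head? = some a)
    (hP : P.Nodup) (hw : w <:+: P) (hwL : w.length ≤ L) :
    (cardInteredges G A w.toFinset : ℝ) ≤
      p * A.card * ((endpoints G P (t + 1) ∩ w.toFinset).card + 1) +
        p * L * (A.filter fun a => Breaks (f a) w).card + 3 * κ := by
  have hsplit := cardInteredges_segment_le_add hf hP hw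
  set T := endpoints G P (t + 1)
  set A₁ := A.filter fun a => w <:+: f a
  set A₂ := A.filter fun a => ¬ w <:+: f a ∧ w.reverse <:+: f a
  set A₃ := A.filter fun a => Breaks (f a) w
  have hnd := hw.sublist.nodup hP
  have htraverse : ∀ B : Finset V, ∀ w' : List V, w'.Nodup → w'.length ≤ L →
      w'.toFinset = w.toFinset →
      (cardInteredges G B (nextSet T w') : ℝ) ≤ p * B.card * ((T ∩ w.toFinset).card + 1) + κ := by
    intro B w' hnd' hL' heq
    have hcard : ((nextSet T w').card : ℝ) ≤ (T ∩ w.toFinset).card + 1 := by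
      exact_mod_cast heq ▸ card_nextSet_le hnd' T
    refine (hlarge B _ ((card_nextSet_le_length T w').trans hL')).trans ?_
    gcongr
  have h₁ := htraverse A₁ w hnd hwL rfl
  have h₂ := htraverse A₂ w.reverse (List.nodup_reverse.2 hnd) (by rwa [List.length_reverse])
    List.toFinset_reverse
  have h₃ : (cardInteredges G A₃ w.toFinset : ℝ) ≤ p * L * A₃.card + κ := by
    have hcard := w.toFinset_card_le.trans hwL
    have hcard' : (w.toFinset.card : ℝ) ≤ L := mod_cast hcard
    calc _ ≤ p * A₃.card * w.toFinset.card + κ := hlarge A₃ _ hcard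
      _ ≤ p * A₃.card * L + κ := by gcongr
      _ = _ := by ring
  have hA : (A₁.card : ℝ) + A₂.card ≤ A.card := by
    have hsub : A₂.card ≤ (A.filter fun a => ¬ w <:+: f a).card :=
      Finset.card_le_card (Finset.monotone_filter_right _ fun _ _ h => h.1)
    have := Finset.card_filter_add_card_filter_not (s := A) fun a => w <:+: f a
    exact_mod_cast (add_le_add_right hsub A₁.card).trans_eq this
  have hmain : p * (A₁.card + A₂.card) * ((T ∩ w.toFinset).card + 1 : ℝ) ≤
      p * A.card * ((T ∩ w.toFinset).card + 1) := by gcongr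
  have hsplit' : (cardInteredges G A w.toFinset : ℝ) ≤ cardInteredges G A₁ (nextSet T w) +
      cardInteredges G A₂ (nextSet T w.reverse) + cardInteredges G A₃ w.toFinset := mod_cast hsplit
  linarith

/-- Within each segment of `P`, all but few edges from `A` lead to vertices that directly follow or
precede an endpoint obtained with one more rotation. -/
lemma cardInteredges_univ_le [Fintype V] (hp : 0 ≤ p) (hL : 0 < L)
    (hlarge : ∀ A B : Finset V, B.card ≤ L → (cardInteredges G A B : ℝ) ≤ p * A.card * B.card + κ)
    (hG : G ≤ Γ) (hP : IsLongestPathOn Γ P) (hA : A ⊆ endpoints G P t) :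
    (cardInteredges G A Finset.univ : ℝ) ≤
      p * A.card * ((endpoints G P (t + 1)).card + (P.length / L + 1 : ℕ)) +
        p * L * (t * A.card) + 3 * (P.length / L + 1 : ℕ) * κ := by
  classical
  choose! f hf using fun a (ha : a ∈ A) => mem_endpoints.1 (hA ha)
  set T := endpoints G P (t + 1)
  set I := Finset.range (P.length / L + 1)
  have hinfix : ∀ i ∈ I, segment P L i <:+: P := fun i _ => segment_infix P L i
  have hdisj : (I : Set ℕ).Pairwise fun i j => (segment P L i).Disjoint (segment P L j) :=
    fun i _ j _ hij => segment_disjoint hL hP.1.2.1 hij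
  have hcover : cardInteredges G A Finset.univ ≤
      ∑ i ∈ I, cardInteredges G A (segment P L i).toFinset := by
    refine le_trans (cardInteredges_le_of_adj fun a ha x _ hax => ⟨ha, ?_, hax⟩)
      (cardInteredges_biUnion_right_le G A I fun i => (segment P L i).toFinset)
    have hx : x ∈ f a :=
      (hP.of_mem_rotSet hG (hf a ha).1).mem_of_adj_head (hf a ha).2 (hG hax)
    simpa [I] using exists_mem_segment hL ((perm_of_mem_rotSet (hf a ha).1).mem_iff.1 hx)
  have hT : ∑ i ∈ I, ((T ∩ (segment P L i).toFinset).card : ℝ) ≤ T.card := by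
    exact_mod_cast sum_card_inter_toFinset_le hdisj T
  have hbreaks : ∑ i ∈ I, ((A.filter fun a => Breaks (f a) (segment P L i)).card : ℝ) ≤
      t * A.card := by
    exact_mod_cast sum_card_breaks_le hinfix hdisj fun a ha => (hf a ha).1
  calc (cardInteredges G A Finset.univ : ℝ)
      ≤ ∑ i ∈ I, (cardInteredges G A (segment P L i).toFinset : ℝ) := by exact_mod_cast hcover
    _ ≤ ∑ i ∈ I, (p * A.card * ((T ∩ (segment P L i).toFinset).card + 1) +
          p * L * (A.filter fun a => Breaks (f a) (segment P L i)).card + 3 * κ) :=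
        Finset.sum_le_sum fun i hi => cardInteredges_segment_le hp hlarge hf hP.1.2.1
          (hinfix i hi) (length_segment_le P L i)
    _ = p * A.card * (∑ i ∈ I, ((T ∩ (segment P L i).toFinset).card : ℝ) + I.card) +
          p * L * ∑ i ∈ I, ((A.filter fun a => Breaks (f a) (segment P L i)).card : ℝ) +
          3 * I.card * κ := by
        simp only [Finset.sum_add_distrib, ← Finset.mul_sum, Finset.sum_const, nsmul_eq_mul]
        ring
    _ ≤ _ := by rw [Finset.card_range]; gcongr

end SegmentCount

section Growth

variable {n L r t k : ℕ} {p ε δ : ℝ} {G H Γ : SimpleGraph (Fin n)} {P : List (Fin n)}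

open Classical in
lemma PosaFamily.card_lt_deg_le (hH : PosaFamily n p ε H) (hr : (r : ℝ) + 1 < n / 2) :
    (Finset.univ.filter fun a => (n - (r + 1)) * p - ε * n * p < deg H a).card ≤ r := by
  obtain ⟨v, hv, hanti, hdeg⟩ := hH
  have hrn : r < n := by
    have : (r : ℝ) < n := by linarith [n.cast_nonneg (α := ℝ)]
    exact_mod_cast this
  have hsub : (Finset.univ.filter fun a => (n - (r + 1)) * p - ε * n * p < deg H a) ⊆
      (Finset.Iio (⟨r, hrn⟩ : Fin n)).image v := by
    intro a ha
    obtain ⟨j, rfl⟩ := hv.2 a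
    refine Finset.mem_image_of_mem v (Finset.mem_Iio.2 (not_le.1 fun hj => ?_))
    have hle : (deg H (v j) : ℝ) ≤ deg H (v ⟨r, hrn⟩) := mod_cast hanti _ _ hj
    exact (Finset.mem_filter.1 ha).2.not_ge (hle.trans (hdeg ⟨r, hrn⟩ hr))
  exact (Finset.card_le_card hsub).trans (Finset.card_image_le.trans_eq (Fin.card_Iio _))

/-- Outside a set of `r` vertices, `H` takes away at most `(n - r - 1) p - ε n p` of the roughly
`n p` edges at each vertex. -/
lemma exists_subset_le_cardInteredges_sdiff (hdeg : ∀ v, (1 - δ) * (n * p) ≤ deg G v)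
    (hH : PosaFamily n p ε H) (hr : (r : ℝ) + 1 < n / 2) (S : Finset (Fin n)) :
    ∃ A ⊆ S, S.card ≤ A.card + r ∧
      A.card * ((r + 1) * p + (ε - δ) * (n * p)) ≤ cardInteredges (G \ H) A Finset.univ := by
  classical
  set A := S.filter fun a => (deg H a : ℝ) ≤ (n - (r + 1)) * p - ε * n * p
  refine ⟨A, Finset.filter_subset _ _, ?_, ?_⟩
  · have hrest : (S.filter fun a => ¬ (deg H a : ℝ) ≤ (n - (r + 1)) * p - ε * n * p).card ≤ r := by
      simp only [not_le]
      exact (Finset.card_le_card (Finset.filter_subset_filter _ S.subset_univ)).trans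
        (hH.card_lt_deg_le hr)
    exact (Finset.card_filter_add_card_filter_not _).symm.trans_le (add_le_add_right hrest _)
  · have hG : A.card * ((1 - δ) * (n * p)) ≤ (cardInteredges G A Finset.univ : ℝ) := by
      rw [cardInteredges_univ, Nat.cast_sum, ← nsmul_eq_mul]
      exact Finset.card_nsmul_le_sum _ _ _ fun a _ => hdeg a
    have hH : (cardInteredges H A Finset.univ : ℝ) ≤
        A.card * ((n - (r + 1)) * p - ε * n * p) := by
      rw [cardInteredges_univ, Nat.cast_sum, ← nsmul_eq_mul]
      exact Finset.sum_le_card_nsmul _ _ _ fun a ha => (Finset.mem_filter.1 ha).2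
    have hadd : (cardInteredges G A Finset.univ : ℝ) ≤
        cardInteredges (G \ H) A Finset.univ + cardInteredges H A Finset.univ :=
      mod_cast cardInteredges_le_add_sdiff G H A Finset.univ
    linarith

lemma endpoints_nonempty (G : SimpleGraph (Fin n)) (hP : P ≠ []) (t : ℕ) :
    (endpoints G P t).Nonempty := by
  obtain ⟨a, l, rfl⟩ := List.exists_cons_of_ne_nil hP
  exact ⟨a, mem_endpoints.2 ⟨_, self_mem_rotSet G _ t, rfl⟩⟩

lemma two_mul_card_endpoints_le (hp : 0 ≤ p) (hn : 3 ≤ n) (hδ : δ ≤ ε / 2)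
    (hG : PseudoRandom n L p ε δ G) (hH : PosaFamily n p ε H) (hΓ : G \ H ≤ Γ)
    (hP : IsLongestPathOn Γ P) (hsmall : ((endpoints (G \ H) P t).card : ℝ) ≤ ε / 40 * n) :
    2 * (endpoints (G \ H) P t).card ≤ (endpoints (G \ H) P (t + 1)).card := by
  set S := endpoints (G \ H) P t
  have hr : ((0 : ℕ) : ℝ) + 1 < n / 2 := by
    have : (3 : ℝ) ≤ n := mod_cast hn
    push_cast
    linarith
  obtain ⟨A, hAS, hcard, hedges⟩ := exists_subset_le_cardInteredges_sdiff hG.le_deg hH hr S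
  obtain rfl : A = S := Finset.eq_of_subset_of_card_le hAS hcard
  obtain ⟨N, hN, hAN⟩ := exists_card_le_forall_adj_mem hΓ hP t
  have hlarge : 5 * S.card < N.card := by
    by_contra! hle
    have hmany : ε / 2 * (n * p) * S.card ≤ cardInteredges (G \ H) S Finset.univ := by
      refine le_trans ?_ hedges
      rw [mul_comm]
      gcongr
      have : ε / 2 * (n * p) ≤ (ε - δ) * (n * p) := by gcongr; linarith
      push_cast
      linarith
    have hinto : (cardInteredges (G \ H) S Finset.univ : ℝ) ≤ cardInteredges G S N :=
      mod_cast cardInteredges_le_of_adj fun a ha v _ hav =>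
        ⟨ha, hAN a ha v hav, (sdiff_le : G \ H ≤ G) hav⟩
    have hfew := hG.small_lt S N (endpoints_nonempty _ hP.1.1 t) hsmall hle
    linarith
  lia

lemma natCast_div_add_one_mul_le {l : ℕ} (hl : l ≤ n) (hL : L ≤ n) :
    ((l / L + 1 : ℕ) : ℝ) * L ≤ 2 * n := by
  have : (l / L + 1) * L ≤ 2 * n := by
    rw [add_mul, one_mul, two_mul]
    exact add_le_add ((Nat.div_mul_le_self l L).trans hl) hL
  exact_mod_cast this

/-- The `m - d` vertices of largest degree in `H` are discarded. -/
lemma exists_subset_sub_mul_le_cardInteredges_sdiff (hp : 0 ≤ p)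
    (hdeg : ∀ v, (1 - δ) * (n * p) ≤ deg G v) (hH : PosaFamily n p ε H) {S : Finset (Fin n)}
    {m d : ℝ} (hmS : m ≤ S.card) (hmn : m ≤ n / 2) (hd : 1 < d) (hdm : d ≤ m) :
    ∃ A ⊆ S, d ≤ A.card ∧
      p * A.card * (m - d + (ε - δ) * n) ≤ cardInteredges (G \ H) A Finset.univ := by
  have hr : (⌊m - d⌋₊ : ℝ) ≤ m - d := Nat.floor_le (by linarith)
  have hr' : m - d ≤ ⌊m - d⌋₊ + 1 := (Nat.lt_floor_add_one _).le
  obtain ⟨A, hAS, hcard, hedges⟩ := exists_subset_le_cardInteredges_sdiff hdeg hH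
    (by linarith : (⌊m - d⌋₊ : ℝ) + 1 < n / 2) S
  refine ⟨A, hAS, ?_, le_trans ?_ hedges⟩
  · have : (S.card : ℝ) ≤ A.card + ⌊m - d⌋₊ := mod_cast hcard
    linarith
  · calc p * A.card * (m - d + (ε - δ) * n)
        ≤ p * A.card * (⌊m - d⌋₊ + 1 + (ε - δ) * n) := by gcongr
      _ = _ := by ring

lemma min_add_le_card_endpoints (hp : 0 < p) (hε : 0 < ε) (hε1 : ε < 1) (hδ0 : 0 < δ)
    (hδ : δ ≤ ε ^ 2 / 1000) (hG : PseudoRandom n L p ε δ G) (hH : PosaFamily n p ε H)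
    (hΓ : G \ H ≤ Γ) (hP : IsLongestPathOn Γ P) (hL : 2 ≤ δ * L) (htL : (t + 1 : ℝ) * L ≤ δ * n)
    (hlarge : ε / 40 * n < (endpoints (G \ H) P t).card) :
    min ((endpoints (G \ H) P t).card : ℝ) (n / 2) + ε / 4 * n ≤
      (endpoints (G \ H) P (t + 1)).card := by
  have hδε : δ ≤ ε / 1000 := by nlinarith
  have hL0 : (0 : ℝ) < L := pos_of_mul_pos_right (by linarith) hδ0.le
  have hLn : (L : ℝ) ≤ δ * n := le_trans (by nlinarith [t.cast_nonneg (α := ℝ)]) htL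
  have hn0 : (0 : ℝ) < n := pos_of_mul_pos_right (hL0.trans_le hLn) hδ0.le
  have hn : 2000 ≤ ε * n := by nlinarith
  obtain ⟨A, hAS, hA, hmany⟩ := exists_subset_sub_mul_le_cardInteredges_sdiff hp.le hG.le_deg hH
    (S := endpoints (G \ H) P t) (d := ε / 80 * n) (min_le_left _ _) (min_le_right _ _)
    (by linarith) (le_min (by linarith) (by nlinarith))
  have hfew := cardInteredges_univ_le hp.le (by exact_mod_cast hL0 : 0 < L)
    (fun B C hC => le_trans (by gcongr; exact sdiff_le) (hG.large_le B C hC)) hΓ hP hAS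
  set K : ℝ := ((P.length / L + 1 : ℕ) : ℝ)
  have hKL : K * L ≤ 2 * n := by
    refine natCast_div_add_one_mul_le (by simpa using hP.1.2.1.length_le_card) ?_
    exact_mod_cast (by nlinarith : (L : ℝ) ≤ n)
  have hK : K ≤ δ * n := by
    nlinarith [(Nat.cast_nonneg _ : (0 : ℝ) ≤ (P.length / L + 1 : ℕ))]
  have herror : 3 * K * (δ * p * n * L) ≤ p * A.card * (12 / 25 * (ε * n)) := by
    calc 3 * K * (δ * p * n * L) = 3 * δ * p * n * (K * L) := by ring
      _ ≤ 3 * (ε ^ 2 / 1000) * p * n * (2 * n) := by gcongr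
      _ = p * (ε / 80 * n) * (12 / 25 * (ε * n)) := by ring
      _ ≤ p * A.card * (12 / 25 * (ε * n)) := by gcongr
  have hcancel := le_of_mul_le_mul_left (a := p * A.card)
    (b := min ((endpoints (G \ H) P t).card : ℝ) (n / 2) - ε / 80 * n + (ε - δ) * n)
    (c := (endpoints (G \ H) P (t + 1)).card + K + L * t + 12 / 25 * (ε * n))
    (by linarith) (mul_pos hp (by nlinarith))
  nlinarith

lemma lt_card_endpoints_or_two_pow_le (hp : 0 ≤ p) (hn : 3 ≤ n) (hδ : δ ≤ ε / 2)
    (hG : PseudoRandom n L p ε δ G) (hH : PosaFamily n p ε H) (hΓ : G \ H ≤ Γ)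
    (hP : IsLongestPathOn Γ P) (t : ℕ) :
    ε / 40 * n < (endpoints (G \ H) P t).card ∨ 2 ^ t ≤ (endpoints (G \ H) P t).card := by
  induction t with
  | zero => exact Or.inr (endpoints_nonempty _ hP.1.1 0).card_pos
  | succ t ih =>
    rcases lt_or_ge (ε / 40 * n) ((endpoints (G \ H) P t).card : ℝ) with hlarge | hsmall
    · exact Or.inl (hlarge.trans_le
        (by exact_mod_cast Finset.card_le_card (endpoints_subset_succ _ P t)))
    · have hdouble := two_mul_card_endpoints_le hp hn hδ hG hH hΓ hP hsmall
      have := ih.resolve_left hsmall.not_gt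
      exact Or.inr (by lia)

lemma lt_card_endpoints_log (hp : 0 ≤ p) (hn : 3 ≤ n) (hδ : δ ≤ ε / 2)
    (hG : PseudoRandom n L p ε δ G) (hH : PosaFamily n p ε H) (hΓ : G \ H ≤ Γ)
    (hP : IsLongestPathOn Γ P) : ε / 40 * n < (endpoints (G \ H) P (Nat.log 2 n + 1)).card := by
  refine (lt_card_endpoints_or_two_pow_le hp hn hδ hG hH hΓ hP _).resolve_right fun hle => ?_
  have hcard := Finset.card_le_univ (endpoints (G \ H) P (Nat.log 2 n + 1))
  rw [Fintype.card_fin] at hcard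
  exact (hle.trans hcard).not_gt (Nat.lt_pow_succ_log_self one_lt_two n)

lemma add_le_of_min_add_le {f : ℕ → ℝ} {c d : ℝ} (hf0 : 0 ≤ f 0) (hd : 0 ≤ d) (hc : c ≤ k * d)
    (hf : ∀ j ≤ k, min (f j) c + d ≤ f (j + 1)) : c + d ≤ f (k + 1) := by
  have hmin : ∀ j ≤ k, min (j * d) c ≤ f j := by
    intro j hj
    induction j with
    | zero => exact (min_le_left _ _).trans (by simpa using hf0)
    | succ j ih =>
      calc min ((j + 1 : ℕ) * d) c ≤ min (j * d + d) (c + d) :=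
            min_le_min (by push_cast; linarith) (by linarith)
        _ = min (j * d) c + d := min_add_add_right _ _ _
        _ ≤ min (f j) c + d := by
            gcongr ?_ + d
            exact le_min (ih (by lia)) (min_le_right _ _)
        _ ≤ f (j + 1) := hf j (by lia)
  have hck : c ≤ f k := (le_min hc le_rfl).trans (hmin k le_rfl)
  simpa [hck] using hf k le_rfl

lemma le_card_endpoints (hp : 0 < p) (hε : 0 < ε) (hε1 : ε < 1) (hδ0 : 0 < δ)
    (hδ : δ ≤ ε ^ 2 / 1000) (hG : PseudoRandom n L p ε δ G) (hH : PosaFamily n p ε H)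
    (hΓ : G \ H ≤ Γ) (hP : IsLongestPathOn Γ P) (hL : 2 ≤ δ * L)
    (htL : ((Nat.log 2 n + (⌈2 / ε⌉₊ + 2) : ℕ) : ℝ) * L ≤ δ * n) :
    (1 / 2 + ε / 4) * n ≤ (endpoints (G \ H) P (Nat.log 2 n + (⌈2 / ε⌉₊ + 2))).card := by
  have hδε : δ ≤ ε / 1000 := by nlinarith
  have hn : 3 ≤ n := by
    have hL0 : (0 : ℝ) < L := pos_of_mul_pos_right (by linarith) hδ0.le
    have hLn : (L : ℝ) ≤ δ * n := le_trans (by push_cast; nlinarith) htL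
    have : (3 : ℝ) ≤ n := by nlinarith
    exact_mod_cast this
  have hk : (n / 2 : ℝ) ≤ ⌈2 / ε⌉₊ * (ε / 4 * n) := by
    calc (n / 2 : ℝ) = 2 / ε * (ε / 4 * n) := by field_simp; norm_num
      _ ≤ ⌈2 / ε⌉₊ * (ε / 4 * n) := by gcongr; exact Nat.le_ceil _
  have hlog := lt_card_endpoints_log hp.le hn (by linarith) hG hH hΓ hP
  have hgrow := add_le_of_min_add_le
    (f := fun j => ((endpoints (G \ H) P (Nat.log 2 n + 1 + j)).card : ℝ))
    (Nat.cast_nonneg _) (by positivity) hk fun j hj => by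
      refine min_add_le_card_endpoints hp hε hε1 hδ0 hδ hG hH hΓ hP hL ?_ (hlog.trans_le ?_)
      · refine le_trans ?_ htL
        gcongr
        exact_mod_cast (by lia : Nat.log 2 n + 1 + j + 1 ≤ Nat.log 2 n + (⌈2 / ε⌉₊ + 2))
      · exact_mod_cast Finset.card_le_card (endpoints_mono _ P (Nat.le_add_right _ j))
  rw [show Nat.log 2 n + (⌈2 / ε⌉₊ + 2) = Nat.log 2 n + 1 + (⌈2 / ε⌉₊ + 1) by lia]
  linarith

end Growth

/-! ### Choice of the parameters -/

section Parameters

variable {n k L : ℕ} {p ε δ η : ℝ}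

lemma natLog_two_le (n : ℕ) : (Nat.log 2 n : ℝ) ≤ 3 / 2 * log n := by
  have hlog2 := Real.log_two_gt_d9
  have hle := Real.natLog_le_logb n 2
  rw [Real.logb, le_div_iff₀ (by push_cast; linarith)] at hle
  push_cast at hle
  nlinarith [(Nat.log 2 n).cast_nonneg (α := ℝ)]

lemma eventually_mul_log_le (c : ℝ) : ∀ᶠ n : ℕ in atTop, c * log n ≤ n := by
  have hlog := (Real.isLittleO_log_id_atTop.const_mul_left c).bound one_pos
  filter_upwards [tendsto_natCast_atTop_atTop.eventually hlog] with n hn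
  simpa using (le_abs_self _).trans hn

/-- The witness is `⌊δ n / (3 log n)⌋`, as there are at most `3 log n` rotations. -/
lemma exists_segment_length (hp : 0 ≤ p) (hδ : 0 < δ) (hδ1 : δ ≤ 1) (hlog : 0 < log n)
    (hk : k ≤ 3 / 2 * log n) (hn : 9 / δ ^ 2 * log n ≤ n) (hnp : 144 / δ ^ 3 * log n ≤ n * p) :
    ∃ L : ℕ, 2 ≤ δ * L ∧ ((Nat.log 2 n + k : ℕ) : ℝ) * L ≤ δ * n ∧ 24 / δ ^ 2 ≤ p * L := by
  set x : ℝ := δ * n / (3 * log n)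
  have hx : 3 ≤ δ * x := by
    calc 3 = δ * (δ * (9 / δ ^ 2 * log n) / (3 * log n)) := by field_simp; norm_num
      _ ≤ δ * (δ * n / (3 * log n)) := by gcongr
  have hx3 : 3 ≤ x := by nlinarith
  have hle : (⌊x⌋₊ : ℝ) ≤ x := Nat.floor_le (by linarith)
  have hlt : x < ⌊x⌋₊ + 1 := Nat.lt_floor_add_one x
  refine ⟨⌊x⌋₊, by nlinarith, ?_, ?_⟩
  · calc ((Nat.log 2 n + k : ℕ) : ℝ) * ⌊x⌋₊ ≤ (3 * log n) * x := by
          gcongr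
          push_cast
          linarith [natLog_two_le n]
      _ = δ * n := by simp only [x]; field_simp
  · calc 24 / δ ^ 2 = 144 / δ ^ 3 * log n * (δ / (6 * log n)) := by field_simp; norm_num
      _ ≤ n * p * (δ / (6 * log n)) := by gcongr
      _ = p * (x / 2) := by simp only [x]; field_simp; ring
      _ ≤ p * ⌊x⌋₊ := by gcongr; linarith

lemma exists_forall_eventually_pseudoRandom (hδ : 0 < δ) (hδε : δ ≤ ε) (hδ1 : δ ≤ 1) :
    ∃ C > 0, ∀ k : ℕ, ∀ η > 0, ∀ᶠ n : ℕ in atTop, ∀ p : ℝ, C * log n / n ≤ p → p ≤ 1 →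
      0 < p ∧ ∃ L : ℕ, 2 ≤ δ * L ∧ ((Nat.log 2 n + k : ℕ) : ℝ) * L ≤ δ * n ∧
        1 - η ≤ Pr n p (PseudoRandom n L p ε δ) := by
  refine ⟨144 / δ ^ 3, by positivity, fun k η hη => ?_⟩
  have hcast := tendsto_natCast_atTop_atTop (R := ℝ)
  filter_upwards [eventually_ge_atTop 2, hcast.eventually_ge_atTop (8 / η),
    (Real.tendsto_log_atTop.comp hcast).eventually_ge_atTop (2 / 3 * k),
    eventually_mul_log_le (9 / δ ^ 2)] with n hn hnη hk hlin p hp hp1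
  have hn1 : (1 : ℝ) < n := mod_cast hn
  have hlog : 0 < log n := Real.log_pos hn1
  have hp0 : 0 < p := lt_of_lt_of_le (by positivity) hp
  have hnp : 144 / δ ^ 3 * log n ≤ n * p := by
    rwa [div_le_iff₀ (by linarith), mul_comm p] at hp
  have hcube : δ ^ 3 ≤ δ ^ 2 := pow_le_pow_of_le_one hδ.le hδ1 (by norm_num)
  have hcube' : δ ^ 3 ≤ ε := (pow_le_of_le_one hδ.le hδ1 (by norm_num)).trans hδε
  obtain ⟨L, hL, htL, hpL⟩ := exists_segment_length (k := k) hp0.le hδ hδ1 hlog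
    (by simp only [Function.comp_apply] at hk; linarith) hlin hnp
  refine ⟨hp0, L, hL, htL, le_trans ?_ (le_pr_pseudoRandom ⟨hp0.le, hp1⟩ (hδ.trans_le hδε) hδ hδ1 hn
    (le_trans (by gcongr; norm_num) hnp) (le_trans (by gcongr; norm_num) hnp) hpL)⟩
  rw [div_le_iff₀ hη, ← div_le_iff₀' (by linarith)] at hnη
  linarith

end Parameters

lemma IsLongestPathOn.of_mem_Rset [DecidableEq V] {G Γ : SimpleGraph V} {P : List V} {t : ℕ} {v : V}
    (hP : IsLongestPathOn Γ P) (hG : G ≤ Γ) (hv : v ∈ Rset G P t) :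
    ∃ Q, IsLongestPathOn Γ Q ∧ Q.head? = some v ∧ Q.getLast? = P.getLast? ∧
      Q.toFinset = P.toFinset := by
  obtain ⟨Q, hQ, hQv⟩ := hv
  exact ⟨Q, hP.of_mem_rotSet hG hQ, hQv, getLast?_of_mem_rotSet hQ,
    List.toFinset_eq_of_perm _ _ (perm_of_mem_rotSet hQ)⟩

theorem many_rotation_endpoints_general (ε : ℝ) (hε : 0 < ε) (hε1 : ε < 1) :
    ∃ C : ℝ, 0 < C ∧ ∀ η : ℝ, 0 < η → ∃ N : ℕ, ∀ n : ℕ, N ≤ n →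
      ∀ p : ℝ, C * Real.log n / n ≤ p → p ≤ 1 →
        1 - η ≤ Pr n p (fun G =>
          ∀ H : SimpleGraph (Fin n), PosaFamily n p ε H →
            ∀ Γ : SimpleGraph (Fin n), G \ H ≤ Γ → ∀ P : List (Fin n), IsLongestPathOn Γ P →
              ∃ U : Set (Fin n), (1 / 2 + ε / 4) * n ≤ (U.ncard : ℝ) ∧
                ∀ v ∈ U, ∃ Q : List (Fin n), IsLongestPathOn Γ Q ∧
                  Q.head? = some v ∧ Q.getLast? = P.getLast? ∧ Q.toFinset = P.toFinset) := by
  set δ : ℝ := ε ^ 2 / 1000 with hδ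
  have hδ0 : 0 < δ := by positivity
  obtain ⟨C, hC, hrandom⟩ := exists_forall_eventually_pseudoRandom (δ := δ) (ε := ε) hδ0
    (by nlinarith) (by nlinarith)
  refine ⟨C, hC, fun η hη => ?_⟩
  obtain ⟨N, hN⟩ := eventually_atTop.1 (hrandom (⌈2 / ε⌉₊ + 2) η hη)
  refine ⟨N, fun n hn p hp hp1 => ?_⟩
  obtain ⟨hp0, L, hL, htL, hpseudo⟩ := hN n hn p hp hp1
  refine hpseudo.trans (pr_mono ⟨hp0.le, hp1⟩ fun G hG H hH Γ hΓ P hP => ?_)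
  refine ⟨Rset (G \ H) P (Nat.log 2 n + (⌈2 / ε⌉₊ + 2)), ?_, fun v hv => hP.of_mem_Rset hΓ hv⟩
  rw [ncard_Rset]
  exact le_card_endpoints hp0 hε hε1 hδ0 hδ.le hG hH hΓ hP hL htL

/-- Lemma 4.3.  For every `0 < ε < 1` there exists `C > 0` such
that, for `p ≥ C log n / n`, a.a.s. for every `H ∈ H^ε_{n,p}(G)` with `G' = G ∖ H`,
every path `P'` on `V` and every longest path `P = v_1…v_ℓ` in `G' ∪ P'`, there is a
set `U ⊆ V` with `|U| ≥ (1/2 + ε/4)n` such that every `v ∈ U` is the endpoint of a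
longest path `Q_v` in `G' ∪ P'` with endpoints `v_ℓ` and `v` and `V(Q_v) = V(P)`. -/
theorem many_rotation_endpoints (ε : ℝ) (hε : 0 < ε) (hε1 : ε < 1) :
    ∃ C : ℝ, 0 < C ∧ ∀ η : ℝ, 0 < η → ∃ N : ℕ, ∀ n : ℕ, N ≤ n →
      ∀ p : ℝ, C * Real.log n / n ≤ p → p ≤ 1 →
        1 - η ≤ Pr n p (fun G =>
          ∀ H : SimpleGraph (Fin n), H ≤ G → PosaFamily n p ε H →
            ∀ P' P : List (Fin n), P'.Nodup →
              IsLongestPathOn ((G \ H) ⊔ listGraph P') P →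
              ∃ U : Set (Fin n), (1/2 + ε/4) * n ≤ (U.ncard : ℝ) ∧
                ∀ v ∈ U, ∃ Q : List (Fin n),
                  IsLongestPathOn ((G \ H) ⊔ listGraph P') Q ∧
                  Q.head? = some v ∧ Q.getLast? = P.getLast? ∧
                  Q.toFinset = P.toFinset) := by
  obtain ⟨C, hC, h⟩ := many_rotation_endpoints_general ε hε hε1
  refine ⟨C, hC, fun η hη => (h η hη).imp fun N hN n hn p hp hp1 => ?_⟩
  have hp0 : 0 ≤ p := le_trans (by positivity) hp
  exact (hN n hn p hp hp1).trans (pr_mono ⟨hp0, hp1⟩ fun G hG H _ hH P' P _ hP =>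
    hG H hH _ le_sup_left P hP)

end Resilience
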